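/- Elliptic Harnack inequality: for all p, q ∈ (1,∞) with 1/p + 1/q < 2/d there exist positive constants c₁, c₂ and κ, depending only on d, p, q, C_reg and C_riso, such that for every choice of edge weights ω, every x₀ ∈ V, every n ≥ 1 and every function u : V → (0,∞) that is harmonic on B(x₀,n), one has u(x) ≤ c₁·exp(c₂·(max{1, ‖μ^ω‖_{p,B(x₀,n)}·‖ν^ω‖_{q,B(x₀,n)}})^κ)·u(y) for all x, y ∈ B(x₀, n/2). -/

import Mathlib

open Finset MeasureTheory
open scoped ENNReal

noncomputable section

namespace RCM

variable {V : Type*}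

/-- `μ^ω(x)`, the sum of the weights of edges incident to `x`. -/
def mu (nbr : V → Finset V) (ω : V → V → ℝ) (x : V) : ℝ := ∑ y ∈ nbr x, ω x y

/-- `ν^ω(x)`, the sum of the reciprocals of the weights of edges incident to `x`. -/
def nu (nbr : V → Finset V) (ω : V → V → ℝ) (x : V) : ℝ := ∑ y ∈ nbr x, (ω x y)⁻¹

/-- `(L_Y^ω f)(x)`. -/
def lap (nbr : V → Finset V) (ω : V → V → ℝ) (f : V → ℝ) (x : V) : ℝ :=
  (mu nbr ω x)⁻¹ * ∑ y ∈ nbr x, ω x y * (f y - f x)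

/-- space-averaged norm `‖f‖_{p,A}` for a real exponent `p`. -/
def nrm (A : Finset V) (p : ℝ) (f : V → ℝ) : ℝ :=
  ((A.card : ℝ)⁻¹ * ∑ x ∈ A, |f x| ^ p) ^ (1 / p)

/-- weighted space-averaged norm `‖f‖_{p,A,φ}` for a real exponent `p`. -/
def nrmW (A : Finset V) (p : ℝ) (φ : V → ℝ) (f : V → ℝ) : ℝ :=
  ((A.card : ℝ)⁻¹ * ∑ x ∈ A, |f x| ^ p * φ x) ^ (1 / p)

/-- space-averaged norm `‖f‖_{p,A}` for an extended exponent `p ∈ (0,∞]`;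
for `p = ∞` this is the maximum of `|f|` over `A`. -/
def nrmE (A : Finset V) (p : ℝ≥0∞) (f : V → ℝ) : ℝ :=
  if p = ⊤ then sSup ((fun x => |f x|) '' (A : Set V)) else nrm A p.toReal f

/-- weighted average `(u)_{A,π}`. -/
def wavg (A : Finset V) (π : V → ℝ) (u : V → ℝ) : ℝ :=
  (∑ x ∈ A, π x * u x) / ∑ x ∈ A, π x

open Classical in
/-- relative internal boundary `∂_B A`. -/
def relBdry (G : SimpleGraph V) (B A : Finset V) : Finset V :=
  A.filter fun z => ∃ y ∈ B, y ∉ A ∧ G.Adj z y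

open Classical in
/-- internal boundary `∂B`. -/
def intBdry (G : SimpleGraph V) (B : Finset V) : Finset V :=
  B.filter fun z => ∃ y, y ∉ B ∧ G.Adj z y

open Classical in
/-- Dirichlet sum `Σ_{x,y ∈ B, x∼y} ω(x,y) (u(x)-u(y))²`. -/
def dSum (G : SimpleGraph V) (ω : V → V → ℝ) (B : Finset V) (u : V → ℝ) : ℝ :=
  ∑ x ∈ B, ∑ y ∈ B, if G.Adj x y then ω x y * (u x - u y) ^ 2 else 0

/-- `E^ω_{η²}(u) = (1/2) Σ_{x,y} η(x)² ω(x,y) (u(y)-u(x))²`. -/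
def energySq (ω : V → V → ℝ) (η u : V → ℝ) : ℝ :=
  (1 / 2) * ∑' x, ∑' y, η x ^ 2 * ω x y * (u y - u x) ^ 2

/-- `E^{ω,η}(u) = (1/2) Σ_{x,y} min(η(x)²,η(y)²) ω(x,y) (u(y)-u(x))²`. -/
def energyMin (ω : V → V → ℝ) (η u : V → ℝ) : ℝ :=
  (1 / 2) * ∑' x, ∑' y, min (η x ^ 2) (η y ^ 2) * ω x y * (u y - u x) ^ 2

/-- `‖∇η‖_{ℓ∞(E)}`, the supremum of `|η(y)-η(x)|` over edges `{x,y}`. -/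
def gradSup (G : SimpleGraph V) (η : V → ℝ) : ℝ :=
  sSup {r : ℝ | ∃ x y, G.Adj x y ∧ r = |η y - η x|}

/-- `u` is caloric on `I × B`: `∂_t u = L_Y^ω u` on `I × B`. -/
def Caloric (nbr : V → Finset V) (ω : V → V → ℝ) (I : Set ℝ) (B : Set V)
    (u : ℝ → V → ℝ) : Prop :=
  ∀ x ∈ B, ∀ t ∈ I, HasDerivAt (fun s => u s x) (lap nbr ω (u t) x) t

/-- `u` is sub-caloric on `I × B`: `∂_t u ≤ L_Y^ω u` on `I × B`. -/
def SubCaloric (nbr : V → Finset V) (ω : V → V → ℝ) (I : Set ℝ) (B : Set V)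
    (u : ℝ → V → ℝ) : Prop :=
  ∀ x ∈ B, ∀ t ∈ I, ∃ d, HasDerivAt (fun s => u s x) d t ∧ d ≤ lap nbr ω (u t) x

/-- `u` is super-caloric on `I × B`: `∂_t u ≥ L_Y^ω u` on `I × B`. -/
def SuperCaloric (nbr : V → Finset V) (ω : V → V → ℝ) (I : Set ℝ) (B : Set V)
    (u : ℝ → V → ℝ) : Prop :=
  ∀ x ∈ B, ∀ t ∈ I, ∃ d, HasDerivAt (fun s => u s x) d t ∧ lap nbr ω (u t) x ≤ d

/-- space-time norm `‖u‖_{p,[a,b]×B,φ}`. -/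
def nrmST (a b : ℝ) (B : Finset V) (p : ℝ) (φ : V → ℝ) (u : ℝ → V → ℝ) : ℝ :=
  ((b - a)⁻¹ * ∫ t in a..b, nrmW B p φ (u t) ^ p) ^ (1 / p)

end RCM

namespace EllipticHarnack

open RCM

/-! ### Pointwise inequalities for powers -/

/-- The derivative of a power at the larger endpoint controls its increment, positive exponents. -/
lemma min_mul_rpow_le_rpow_sub {a b γ m : ℝ} (hb : 0 < b) (hab : b ≤ a) (hm : 0 < m) (hm1 : m ≤ 1)
    (hmγ : m ≤ γ) : m * (a ^ (γ - 1) * (a - b)) ≤ a ^ γ - b ^ γ := by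
  have ha : 0 < a := hb.trans_le hab
  obtain ⟨t, ht, rfl⟩ : ∃ t, 0 < t ∧ b = a * t := ⟨b / a, by positivity, by field_simp⟩
  have ht1 : t ≤ 1 := by by_contra h; push Not at h; nlinarith
  have key : m * (1 - t) ≤ 1 - t ^ γ := by
    have h1 : t ^ γ ≤ t ^ m := Real.rpow_le_rpow_of_exponent_ge ht ht1 hmγ
    have h2 := rpow_one_add_le_one_add_mul_self (s := t - 1) (by linarith) hm.le hm1
    rw [show 1 + (t - 1) = t by ring] at h2
    nlinarith
  rw [Real.mul_rpow ha.le ht.le, Real.rpow_sub_one ha.ne']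
  have : 0 < a ^ γ := by positivity
  have e : m * (a ^ γ / a * (a - a * t)) = a ^ γ * (m * (1 - t)) := by field_simp
  rw [e]; nlinarith

/-- The derivative of a power at the larger endpoint controls its increment, negative exponents. -/
lemma min_mul_rpow_le_rpow_sub_of_neg {a b γ m : ℝ} (hb : 0 < b) (hab : b ≤ a)
    (hmγ : γ ≤ -m) (hm : 0 < m) : m * (a ^ (γ - 1) * (a - b)) ≤ b ^ γ - a ^ γ := by
  have ha : 0 < a := hb.trans_le hab
  obtain ⟨t, ht, rfl⟩ : ∃ t, 0 < t ∧ b = a * t := ⟨b / a, by positivity, by field_simp⟩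
  have ht1 : t ≤ 1 := by by_contra h; push Not at h; nlinarith
  have key : m * (1 - t) ≤ t ^ γ - 1 := by
    have h1 := Real.add_one_le_exp (Real.log t * γ)
    rw [← Real.rpow_def_of_pos ht] at h1
    have h2 := Real.log_le_sub_one_of_pos ht
    nlinarith
  rw [Real.mul_rpow ha.le ht.le, Real.rpow_sub_one ha.ne']
  have : 0 < a ^ γ := by positivity
  have e : m * (a ^ γ / a * (a - a * t)) = a ^ γ * (m * (1 - t)) := by field_simp
  rw [e]; nlinarith

/-- Increments of a power are controlled by the derivative at the larger endpoint. -/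
lemma rpow_sub_sq_le {a b α : ℝ} (hb : 0 < b) (hab : b ≤ a) (hα : 0 < α) :
    (a ^ α - b ^ α) ^ 2 ≤ (1 + α ^ 2) * (a ^ (2 * α - 2) * (a - b) ^ 2) := by
  have ha : 0 < a := hb.trans_le hab
  obtain ⟨t, ht, rfl⟩ : ∃ t, 0 < t ∧ b = a * t := ⟨b / a, by positivity, by field_simp⟩
  have ht1 : t ≤ 1 := by by_contra h; push Not at h; nlinarith
  have h0 : t ^ α ≤ 1 := Real.rpow_le_one ht.le ht1 hα.le
  have key : (1 - t ^ α) ^ 2 ≤ (1 + α ^ 2) * (1 - t) ^ 2 := by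
    rcases le_total α 1 with h | h
    · have h1 : t ^ (1 : ℝ) ≤ t ^ α := Real.rpow_le_rpow_of_exponent_ge ht ht1 h
      rw [Real.rpow_one] at h1
      nlinarith [mul_nonneg (sq_nonneg α) (sq_nonneg (1 - t))]
    · have h2 := one_add_mul_self_le_rpow_one_add (s := t - 1) (by linarith) h
      rw [show 1 + (t - 1) = t by ring] at h2
      have : (1 - t ^ α) ^ 2 ≤ (α * (1 - t)) ^ 2 :=
        pow_le_pow_left₀ (by linarith) (by linarith) 2
      nlinarith [sq_nonneg (1 - t)]
  have e1 : a ^ (2 * α - 2) = (a ^ α) ^ 2 / a ^ 2 := by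
    rw [Real.rpow_sub ha, mul_comm, Real.rpow_mul ha.le]; norm_cast
  have e : (1 + α ^ 2) * ((a ^ α) ^ 2 / a ^ 2 * (a - a * t) ^ 2) =
      (a ^ α) ^ 2 * ((1 + α ^ 2) * (1 - t) ^ 2) := by field_simp
  rw [Real.mul_rpow ha.le ht.le, e1, e]
  have : 0 ≤ (a ^ α) ^ 2 := by positivity
  nlinarith

/-- Increments of negative powers are controlled by the product of increments of `t` and
`t ^ (2 * α - 1)`. -/
lemma rpow_sub_sq_le_of_neg {a b α : ℝ} (hb : 0 < b) (hab : b ≤ a) (hα : α < 0) :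
    (a ^ α - b ^ α) ^ 2 ≤
      (1 + α ^ 2) * ((b ^ (2 * α - 1) - a ^ (2 * α - 1)) * (a - b)) := by
  have ha : 0 < a := hb.trans_le hab
  obtain ⟨t, ht, rfl⟩ : ∃ t, 0 < t ∧ a = b * t := ⟨a / b, by positivity, by field_simp⟩
  have ht1 : 1 ≤ t := by by_contra h; push Not at h; nlinarith
  have hs : (t⁻¹) ≤ 1 := inv_le_one_of_one_le₀ ht1
  have hs0 : 0 < t⁻¹ := by positivity
  have e2 : t ^ α = t⁻¹ ^ (-α) := by rw [Real.inv_rpow ht.le, Real.rpow_neg ht.le, inv_inv]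
  have h0 : t ^ α ≤ 1 := Real.rpow_le_one_of_one_le_of_nonpos ht1 hα.le
  have h3 : (1 - t ^ α) ^ 2 ≤ (1 + α ^ 2) * (1 - t⁻¹) ^ 2 := by
    have := rpow_sub_sq_le (a := 1) (b := t⁻¹) (α := -α) hs0 hs (by linarith)
    rw [← e2] at this
    simpa using this
  have h4 : t ^ (2 * α - 1) ≤ t⁻¹ := by
    rw [← Real.rpow_neg_one]
    exact Real.rpow_le_rpow_of_exponent_le ht1 (by linarith)
  have h5 : (1 - t⁻¹) ^ 2 ≤ (1 - t ^ (2 * α - 1)) * (t - 1) := by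
    have : 1 - t⁻¹ ≤ t - 1 := by
      have : t⁻¹ * t = 1 := by field_simp
      nlinarith [sq_nonneg (t - 1)]
    nlinarith
  have e1 : b ^ (2 * α - 1) = (b ^ α) ^ 2 / b := by
    rw [Real.rpow_sub_one hb.ne', mul_comm, Real.rpow_mul hb.le]; norm_cast
  have e : (1 + α ^ 2) * (((b ^ α) ^ 2 / b - (b ^ α) ^ 2 / b * t ^ (2 * α - 1)) * (b * t - b)) =
      (b ^ α) ^ 2 * ((1 + α ^ 2) * ((1 - t ^ (2 * α - 1)) * (t - 1))) := by field_simp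
  rw [Real.mul_rpow hb.le ht.le, Real.mul_rpow hb.le ht.le, e1, e]
  have h6 : (1 + α ^ 2) * (1 - t⁻¹) ^ 2 ≤ (1 + α ^ 2) * ((1 - t ^ (2 * α - 1)) * (t - 1)) := by
    gcongr
  have : 0 ≤ (b ^ α) ^ 2 := by positivity
  nlinarith

/-- Lower bound for the product of the increments of `η² u^γ` and `u`, for `γ > 0`. -/
lemma test_increment_ge {a b γ m η ζ : ℝ} (hb : 0 < b) (hab : b ≤ a) (hm : 0 < m) (hm1 : m ≤ 1)
    (hmγ : m ≤ γ) (hη : 0 ≤ η) :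
    1 / 2 * (η ^ 2 * ((a ^ γ - b ^ γ) * (a - b))) - (1 + 2 / m) * ((η - ζ) ^ 2 * a ^ (γ + 1)) ≤
      (η ^ 2 * a ^ γ - ζ ^ 2 * b ^ γ) * (a - b) := by
  have ha : 0 < a := hb.trans_le hab
  have h1 := min_mul_rpow_le_rpow_sub hb hab hm hm1 hmγ
  have hba : b ^ γ ≤ a ^ γ := Real.rpow_le_rpow hb.le hab (by linarith)
  rw [Real.rpow_sub_one ha.ne'] at h1
  rw [Real.rpow_add_one ha.ne']
  have hA : 0 < a ^ γ := by positivity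
  have hB : 0 < b ^ γ := by positivity
  set A := a ^ γ
  set B := b ^ γ
  set δ := a - b with hδ
  have hδ0 : 0 ≤ δ := by linarith
  have hδa : δ ≤ a := by linarith
  have hD : 0 ≤ (A - B) * δ := mul_nonneg (by linarith) hδ0
  rcases le_total ζ η with h | h
  swap
  · have h2 : m * (A / a * δ ^ 2) ≤ (A - B) * δ := by nlinarith
    have h3 : (ζ - η) ^ 2 * B * δ ≤ (ζ - η) ^ 2 * (A * a) := by
      rw [mul_assoc]; gcongr
    have h4 : 2 * (η * (ζ - η) * (B * δ)) ≤
        1 / 2 * (η ^ 2 * ((A - B) * δ)) + 2 / m * ((ζ - η) ^ 2 * (A * a)) := by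
      have h5 : η * (ζ - η) * (B * δ) ≤ η * (ζ - η) * (A * δ) := by
        have : 0 ≤ η * (ζ - η) := mul_nonneg hη (by linarith)
        gcongr
      have h6 : 2 * (η * (ζ - η) * (A * δ)) ≤
          m / 2 * (η ^ 2 * (A / a * δ ^ 2)) + 2 / m * ((ζ - η) ^ 2 * (A * a)) := by
        have : m / 2 * (η ^ 2 * (A / a * δ ^ 2)) + 2 / m * ((ζ - η) ^ 2 * (A * a))
          - 2 * (η * (ζ - η) * (A * δ)) = A * (m * η * δ - 2 * (ζ - η) * a) ^ 2 / (2 * m * a) := by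
          field_simp; ring
        have : 0 ≤ A * (m * η * δ - 2 * (ζ - η) * a) ^ 2 / (2 * m * a) := by positivity
        linarith
      have h7 : η ^ 2 * (m * (A / a * δ ^ 2)) ≤ η ^ 2 * ((A - B) * δ) := by gcongr
      nlinarith
    nlinarith
  · have h2 : 0 ≤ (η ^ 2 - ζ ^ 2) * (B * δ) ∨ ζ < 0 := by
      rcases lt_or_ge ζ 0 with h' | h'
      · exact Or.inr h'
      · exact Or.inl (mul_nonneg (by nlinarith) (by positivity))
    have h8 : 0 ≤ 2 / m * ((η - ζ) ^ 2 * (A * a)) := by positivity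
    have h9 : 0 ≤ η ^ 2 * ((A - B) * δ) := by positivity
    rcases h2 with h2 | h2
    · have : 0 ≤ (η - ζ) ^ 2 * (A * a) := by positivity
      nlinarith
    · have h10 : (η - ζ) ^ 2 * (B * δ) ≤ (η - ζ) ^ 2 * (A * a) := by gcongr
      have h11 : 0 ≤ (η * (- ζ)) * (B * δ) :=
        mul_nonneg (mul_nonneg hη (by linarith)) (by positivity)
      have h12 : 0 ≤ η ^ 2 * (B * δ) := by positivity
      nlinarith

/-- Lower bound for the product of the increments of `-η² u^γ` and `u`, for `γ < 0`. -/
lemma test_increment_ge_of_neg {a b γ m η ζ : ℝ} (hb : 0 < b) (hab : b ≤ a) (hm : 0 < m)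
    (hmγ : γ ≤ -m) (hη : 0 ≤ η) (hζ : 0 ≤ ζ) :
    1 / 2 * (ζ ^ 2 * ((b ^ γ - a ^ γ) * (a - b))) - (1 + 2 / m) * ((η - ζ) ^ 2 * a ^ (γ + 1)) ≤
      (ζ ^ 2 * b ^ γ - η ^ 2 * a ^ γ) * (a - b) := by
  have ha : 0 < a := hb.trans_le hab
  have h1 := min_mul_rpow_le_rpow_sub_of_neg hb hab hmγ hm
  have hba : a ^ γ ≤ b ^ γ := Real.rpow_le_rpow_of_nonpos hb hab (by linarith)
  rw [Real.rpow_sub_one ha.ne'] at h1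
  rw [Real.rpow_add_one ha.ne']
  have hA : 0 < a ^ γ := by positivity
  have hB : 0 < b ^ γ := by positivity
  set A := a ^ γ
  set B := b ^ γ
  set δ := a - b with hδ
  have hδ0 : 0 ≤ δ := by linarith
  have hδa : δ ≤ a := by linarith
  have hD : 0 ≤ (B - A) * δ := mul_nonneg (by linarith) hδ0
  rcases le_total ζ η with h | h
  · have h2 : m * (A / a * δ ^ 2) ≤ (B - A) * δ := by nlinarith
    have h3 : (η - ζ) ^ 2 * A * δ ≤ (η - ζ) ^ 2 * (A * a) := by
      rw [mul_assoc]; gcongr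
    have h4 : 2 * (ζ * (η - ζ) * (A * δ)) ≤
        1 / 2 * (ζ ^ 2 * ((B - A) * δ)) + 2 / m * ((η - ζ) ^ 2 * (A * a)) := by
      have h6 : 2 * (ζ * (η - ζ) * (A * δ)) ≤
          m / 2 * (ζ ^ 2 * (A / a * δ ^ 2)) + 2 / m * ((η - ζ) ^ 2 * (A * a)) := by
        have : m / 2 * (ζ ^ 2 * (A / a * δ ^ 2)) + 2 / m * ((η - ζ) ^ 2 * (A * a))
          - 2 * (ζ * (η - ζ) * (A * δ)) = A * (m * ζ * δ - 2 * (η - ζ) * a) ^ 2 / (2 * m * a) := by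
          field_simp; ring
        have : 0 ≤ A * (m * ζ * δ - 2 * (η - ζ) * a) ^ 2 / (2 * m * a) := by positivity
        linarith
      have h7 : ζ ^ 2 * (m * (A / a * δ ^ 2)) ≤ ζ ^ 2 * ((B - A) * δ) := by gcongr
      nlinarith
    nlinarith
  · have h2 : 0 ≤ (ζ ^ 2 - η ^ 2) * (A * δ) := mul_nonneg (by nlinarith) (by positivity)
    have h8 : 0 ≤ 2 / m * ((η - ζ) ^ 2 * (A * a)) := by positivity
    have h9 : 0 ≤ ζ ^ 2 * ((B - A) * δ) := by positivity
    have : 0 ≤ (η - ζ) ^ 2 * (A * a) := by positivity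
    nlinarith

lemma sq_add_le_two_mul (x y : ℝ) : (x + y) ^ 2 ≤ 2 * x ^ 2 + 2 * y ^ 2 := by
  nlinarith [sq_nonneg (x - y)]

/-- Pointwise Caccioppoli inequality: `ε` is the sign of `2 * α - 1`. -/
lemma caccioppoli_pointwise {a b α m η ζ : ℝ} (ha : 0 < a) (hb : 0 < b) (hη : 0 ≤ η) (hζ : 0 ≤ ζ)
    (hm : 0 < m) (hm1 : m ≤ 1) (hα : α ≠ 0) {ε : ℝ}
    (hε : (ε = 1 ∧ m ≤ 2 * α - 1) ∨ (ε = -1 ∧ 2 * α - 1 ≤ -m)) :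
    (η * a ^ α - ζ * b ^ α) ^ 2 ≤
      4 * (1 + α ^ 2) / m *
        (ε * ((η ^ 2 * a ^ (2 * α - 1) - ζ ^ 2 * b ^ (2 * α - 1)) * (a - b))) +
      14 * (1 + α ^ 2) / m ^ 2 * ((η - ζ) ^ 2 * (a ^ (2 * α) + b ^ (2 * α))) := by
  wlog hab : b ≤ a generalizing a b η ζ
  · have := this hb ha hζ hη (by linarith)
    calc _ = (ζ * b ^ α - η * a ^ α) ^ 2 := by ring
      _ ≤ _ := this
      _ = _ := by ring
  have hc : (1 : ℝ) ≤ 1 + α ^ 2 := by nlinarith [sq_nonneg α]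
  set c := 1 + α ^ 2 with hcdef
  have hapow : (a ^ α) ^ 2 = a ^ (2 * α) := by
    rw [mul_comm, Real.rpow_mul ha.le]; norm_cast
  have hbpow : (b ^ α) ^ 2 = b ^ (2 * α) := by
    rw [mul_comm, Real.rpow_mul hb.le]; norm_cast
  have hA2 : 0 < a ^ (2 * α) := by positivity
  have hB2 : 0 < b ^ (2 * α) := by positivity
  have hE : 0 ≤ (η - ζ) ^ 2 * (a ^ (2 * α) + b ^ (2 * α)) := by positivity
  have hEa : (η - ζ) ^ 2 * a ^ (2 * α) ≤ (η - ζ) ^ 2 * (a ^ (2 * α) + b ^ (2 * α)) := by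
    gcongr; linarith
  have hEb : (η - ζ) ^ 2 * b ^ (2 * α) ≤ (η - ζ) ^ 2 * (a ^ (2 * α) + b ^ (2 * α)) := by
    gcongr; linarith
  have hK : 4 * c / m * (1 + 2 / m) + 2 ≤ 14 * c / m ^ 2 := by
    have : 14 * c / m ^ 2 - (4 * c / m * (1 + 2 / m) + 2) =
      (6 * c - 4 * c * m - 2 * m ^ 2) / m ^ 2 := by field_simp; ring
    have : 0 ≤ (6 * c - 4 * c * m - 2 * m ^ 2) / m ^ 2 := by
      apply div_nonneg _ (by positivity)
      nlinarith
    linarith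
  have finish : ∀ θ D Q, (η * a ^ α - ζ * b ^ α) ^ 2 ≤ 2 * (θ * (a ^ α - b ^ α) ^ 2) +
      2 * ((η - ζ) ^ 2 * (a ^ (2 * α) + b ^ (2 * α))) → 0 ≤ θ →
      (a ^ α - b ^ α) ^ 2 ≤ c / m * D →
      1 / 2 * (θ * D) - (1 + 2 / m) * ((η - ζ) ^ 2 * a ^ (2 * α)) ≤ Q →
      (η * a ^ α - ζ * b ^ α) ^ 2 ≤ 4 * c / m * Q +
        14 * c / m ^ 2 * ((η - ζ) ^ 2 * (a ^ (2 * α) + b ^ (2 * α))) := by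
    intro θ D Q h1 h2 h3 h4
    have h5 : θ * (a ^ α - b ^ α) ^ 2 ≤ θ * (c / m * D) := by gcongr
    have h6 : 1 / 2 * (θ * D) ≤ Q + (1 + 2 / m) * ((η - ζ) ^ 2 * (a ^ (2 * α) + b ^ (2 * α))) := by
      have : (1 + 2 / m) * ((η - ζ) ^ 2 * a ^ (2 * α)) ≤
        (1 + 2 / m) * ((η - ζ) ^ 2 * (a ^ (2 * α) + b ^ (2 * α))) := by gcongr
      linarith
    have h7 : 4 * c / m * (1 / 2 * (θ * D)) ≤ 4 * c / m *
      (Q + (1 + 2 / m) * ((η - ζ) ^ 2 * (a ^ (2 * α) + b ^ (2 * α)))) := by gcongr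
    have h8 := mul_le_mul_of_nonneg_right hK hE
    have e1 : 4 * c / m * (1 / 2 * (θ * D)) = 2 * (θ * (c / m * D)) := by ring
    nlinarith
  rcases hε with ⟨rfl, hγ⟩ | ⟨rfl, hγ⟩
  · rw [one_mul]
    refine finish (η ^ 2) ((a ^ (2 * α - 1) - b ^ (2 * α - 1)) * (a - b)) _ ?_ (sq_nonneg _) ?_ ?_
    · have e : η * a ^ α - ζ * b ^ α = η * (a ^ α - b ^ α) + (η - ζ) * b ^ α := by ring
      have := sq_add_le_two_mul (η * (a ^ α - b ^ α)) ((η - ζ) * b ^ α)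
      rw [e]; rw [mul_pow, mul_pow, hbpow] at this
      linarith
    · have h1 := rpow_sub_sq_le hb hab (α := α) (by linarith)
      have h2 := min_mul_rpow_le_rpow_sub hb hab hm hm1 hγ
      rw [show 2 * α - 1 - 1 = 2 * α - 2 by ring] at h2
      have h3 : a ^ (2 * α - 2) * (a - b) ^ 2 ≤
          (a ^ (2 * α - 1) - b ^ (2 * α - 1)) * (a - b) / m := by
        rw [le_div_iff₀ hm]
        nlinarith
      calc _ ≤ _ := h1
        _ ≤ c * ((a ^ (2 * α - 1) - b ^ (2 * α - 1)) * (a - b) / m) := by gcongr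
        _ = _ := by ring
    · have := test_increment_ge (ζ := ζ) hb hab hm hm1 hγ hη
      rwa [show 2 * α - 1 + 1 = 2 * α by ring] at this
  · have e0 : -1 * ((η ^ 2 * a ^ (2 * α - 1) - ζ ^ 2 * b ^ (2 * α - 1)) * (a - b)) =
      (ζ ^ 2 * b ^ (2 * α - 1) - η ^ 2 * a ^ (2 * α - 1)) * (a - b) := by ring
    rw [e0]
    refine finish (ζ ^ 2) ((b ^ (2 * α - 1) - a ^ (2 * α - 1)) * (a - b)) _ ?_ (sq_nonneg _) ?_ ?_
    · have e : η * a ^ α - ζ * b ^ α = ζ * (a ^ α - b ^ α) + (η - ζ) * a ^ α := by ring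
      have := sq_add_le_two_mul (ζ * (a ^ α - b ^ α)) ((η - ζ) * a ^ α)
      rw [e]; rw [mul_pow, mul_pow, hapow] at this
      linarith
    · rcases lt_or_gt_of_ne hα with h | h
      · have h1 := rpow_sub_sq_le_of_neg hb hab h
        have hD : 0 ≤ (b ^ (2 * α - 1) - a ^ (2 * α - 1)) * (a - b) :=
          mul_nonneg (sub_nonneg.2 (Real.rpow_le_rpow_of_nonpos hb hab (by linarith)))
            (by linarith)
        have h2 : c ≤ c / m := by rw [le_div_iff₀ hm]; nlinarith
        calc _ ≤ _ := h1
          _ ≤ _ := by gcongr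
      · have h1 := rpow_sub_sq_le hb hab h
        have h2 := min_mul_rpow_le_rpow_sub_of_neg hb hab hγ hm
        rw [show 2 * α - 1 - 1 = 2 * α - 2 by ring] at h2
        have h3 : a ^ (2 * α - 2) * (a - b) ^ 2 ≤
            (b ^ (2 * α - 1) - a ^ (2 * α - 1)) * (a - b) / m := by
          rw [le_div_iff₀ hm]
          nlinarith
        calc _ ≤ _ := h1
          _ ≤ c * ((b ^ (2 * α - 1) - a ^ (2 * α - 1)) * (a - b) / m) := by gcongr
          _ = _ := by ring
    · have := test_increment_ge_of_neg hb hab hm hγ hη hζ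
      rwa [show 2 * α - 1 + 1 = 2 * α by ring] at this

/-- Pointwise logarithmic Caccioppoli inequality. -/
lemma log_caccioppoli_pointwise {a b η ζ : ℝ} (ha : 0 < a) (hb : 0 < b) (hη : 0 ≤ η)
    (hζ : 0 ≤ ζ) :
    1 / 2 * (min η ζ ^ 2 * (Real.log a - Real.log b) ^ 2) ≤
      -((η ^ 2 * a⁻¹ - ζ ^ 2 * b⁻¹) * (a - b)) + 3 * (η - ζ) ^ 2 := by
  wlog hab : b ≤ a generalizing a b η ζ
  · have := this hb ha hζ hη (by linarith)
    rw [min_comm]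
    calc _ = 1 / 2 * (min ζ η ^ 2 * (Real.log b - Real.log a) ^ 2) := by ring
      _ ≤ _ := this
      _ = _ := by ring
  have h := test_increment_ge_of_neg (γ := -1) (m := 1) hb hab one_pos le_rfl hη hζ
  rw [Real.rpow_neg_one, Real.rpow_neg_one, show (-1 + 1 : ℝ) = 0 by norm_num,
    Real.rpow_zero] at h
  have h1 : (Real.log a - Real.log b) ^ 2 ≤ (b⁻¹ - a⁻¹) * (a - b) := by
    obtain ⟨t, ht, rfl⟩ : ∃ t, 0 < t ∧ a = b * t ^ 2 :=
      ⟨Real.sqrt (a / b), by positivity, by rw [Real.sq_sqrt (by positivity)]; field_simp⟩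
    have ht1 : 1 ≤ t := by
      by_contra h'
      push Not at h'
      have : t ^ 2 < 1 := by nlinarith
      nlinarith
    rw [Real.log_mul hb.ne' (by positivity), Real.log_pow]
    have e : (b⁻¹ - (b * t ^ 2)⁻¹) * (b * t ^ 2 - b) = (t - t⁻¹) ^ 2 := by field_simp
    rw [e]
    have h2 : 0 ≤ Real.log t := Real.log_nonneg ht1
    have h3 : 2 * Real.log t ≤ t - t⁻¹ := by
      have := Real.self_le_sinh_iff.2 h2
      rw [Real.sinh_eq, Real.exp_neg, Real.exp_log ht] at this
      linarith
    have : (2 * Real.log t) ^ 2 ≤ (t - t⁻¹) ^ 2 := pow_le_pow_left₀ (by linarith) h3 2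
    calc _ = (2 * Real.log t) ^ 2 := by push_cast; ring
      _ ≤ _ := this
  have h2 : min η ζ ^ 2 * (Real.log a - Real.log b) ^ 2 ≤ ζ ^ 2 * ((b⁻¹ - a⁻¹) * (a - b)) := by
    gcongr
    exact min_le_right _ _
  nlinarith

/-- Increments of powers with exponent at least one. -/
lemma abs_rpow_sub_rpow_le {a b s : ℝ} (ha : 0 ≤ a) (hb : 0 ≤ b) (hs : 1 ≤ s) :
    |a ^ s - b ^ s| ≤ s * ((a ^ (s - 1) + b ^ (s - 1)) * |a - b|) := by
  wlog hab : b ≤ a generalizing a b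
  · have := this hb ha (by linarith)
    rw [abs_sub_comm, abs_sub_comm a b, add_comm (a ^ (s - 1))]; exact this
  rcases ha.eq_or_lt with rfl | ha
  · obtain rfl : b = 0 := le_antisymm hab hb
    simp
  rw [abs_of_nonneg (sub_nonneg.2 (Real.rpow_le_rpow hb hab (by linarith))),
    abs_of_nonneg (sub_nonneg.2 hab)]
  obtain ⟨t, ht, rfl⟩ : ∃ t, 0 ≤ t ∧ b = a * t := ⟨b / a, by positivity, by field_simp⟩
  have h2 := one_add_mul_self_le_rpow_one_add (s := t - 1) (by linarith) hs
  rw [show 1 + (t - 1) = t by ring] at h2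
  have h3 : a ^ s - (a * t) ^ s ≤ s * (a ^ (s - 1) * (a - a * t)) := by
    rw [Real.mul_rpow ha.le ht, Real.rpow_sub_one ha.ne']
    have e : s * (a ^ s / a * (a - a * t)) = a ^ s * (s * (1 - t)) := by field_simp
    rw [e]
    have : 0 < a ^ s := by positivity
    nlinarith
  have h4 : 0 ≤ (a * t) ^ (s - 1) := by positivity
  have h5 : s * (a ^ (s - 1) * (a - a * t)) ≤
      s * ((a ^ (s - 1) + (a * t) ^ (s - 1)) * (a - a * t)) := by
    gcongr
    linarith
  linarith

/-- A connected weighted graph satisfying volume regularity of order `d` and the relative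
isoperimetric inequality. -/
structure ConductanceGraph (V : Type) (d : ℕ) (Creg Criso : ℝ) where
  G : SimpleGraph V
  nbr : V → Finset V
  mem_nbr : ∀ x y, y ∈ nbr x ↔ G.Adj x y
  connected : G.Connected
  ball : V → ℝ → Finset V
  mem_ball : ∀ (x : V) (r : ℝ) (y : V), y ∈ ball x r ↔ (G.dist x y : ℝ) ≤ r
  volume : ∀ (x : V) (r : ℝ), 1 ≤ r →
    Creg⁻¹ * r ^ d ≤ ((ball x r).card : ℝ) ∧ ((ball x r).card : ℝ) ≤ Creg * r ^ d
  isoperimetry : ∀ (x : V) (r : ℝ) (A : Finset V), 1 ≤ r → A.Nonempty → A ⊆ ball x r →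
    (A.card : ℝ) < ((ball x r).card : ℝ) / 2 →
    Criso / r ≤ ((relBdry G (ball x r) A).card : ℝ) / (A.card : ℝ)
  ω : V → V → ℝ
  symm : ∀ x y, ω x y = ω y x
  pos : ∀ x y, G.Adj x y → 0 < ω x y
  zero : ∀ x y, ¬ G.Adj x y → ω x y = 0

/-! ### The layer cake argument -/

open Classical in
/-- Indicator function of a finite set. -/
def ind {V : Type*} (A : Finset V) (x : V) : ℝ := if x ∈ A then 1 else 0

open Classical in
/-- Adjacency as a number. -/
def adj {V : Type*} (G : SimpleGraph V) (x y : V) : ℝ := if G.Adj x y then 1 else 0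

lemma adj_nonneg {V : Type*} (G : SimpleGraph V) (x y : V) : 0 ≤ adj G x y := by
  unfold adj; split_ifs <;> norm_num

/-- Functional inequalities for sublinear functionals follow from their version for sets. -/
lemma layer_cake {V : Type*} (W : Finset V) (a : V → V → ℝ) (Φ : (V → ℝ) → ℝ)
    (hadd : ∀ f g : V → ℝ, (∀ x, 0 ≤ f x) → (∀ x, 0 ≤ g x) →
      Φ (fun x => f x + g x) ≤ Φ f + Φ g)
    (hhom : ∀ (c : ℝ) (f : V → ℝ), 0 ≤ c → (∀ x, 0 ≤ f x) → Φ (fun x => c * f x) = c * Φ f)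
    (P : Finset V → Prop) (hP : ∀ A A', A' ⊆ A → P A → P A')
    (hset : ∀ A, P A → A.Nonempty →
      Φ (ind A) ≤ ∑ x ∈ W, ∑ y ∈ W, a x y * |ind A x - ind A y|)
    (S : Finset V) (hS : P S) (f : V → ℝ) (hf : ∀ x, 0 ≤ f x) (hfS : ∀ x, x ∉ S → f x = 0) :
    Φ f ≤ ∑ x ∈ W, ∑ y ∈ W, a x y * |f x - f y| := by
  classical
  induction S using Finset.strongInduction generalizing f with
  | H S ih =>
    rcases S.eq_empty_or_nonempty with rfl | hne
    · have h0 : f = fun x => 0 * f x := by funext x; simp [hfS x]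
      have h1 : Φ f = 0 := by rw [h0, hhom 0 f le_rfl hf]; ring
      rw [h1]
      apply le_of_eq
      symm
      apply Finset.sum_eq_zero
      intro x _
      apply Finset.sum_eq_zero
      intro y _
      simp [hfS]
    obtain ⟨z, hz, hmin⟩ := S.exists_min_image f hne
    set m := f z with hm
    set g : V → ℝ := fun x => f x - m * ind S x with hg
    have hind : ∀ x, 0 ≤ ind S x := by intro x; unfold ind; split_ifs <;> norm_num
    have hg0 : ∀ x, 0 ≤ g x := by
      intro x
      by_cases hx : x ∈ S
      · simp [hg, ind, hx, hmin x hx]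
      · simp [hg, ind, hx, hfS x hx]
    have hgS : ∀ x, x ∉ S.erase z → g x = 0 := by
      intro x hx
      by_cases hxz : x = z
      · subst hxz; simp [hg, ind, hz, hm]
      · have : x ∉ S := fun h => hx (Finset.mem_erase.2 ⟨hxz, h⟩)
        simp [hg, ind, this, hfS x this]
    have h1 := ih (S.erase z) (Finset.erase_ssubset hz) (hP _ _ (Finset.erase_subset _ _) hS)
      g hg0 hgS
    have h2 := hset S hS hne
    have e : f = fun x => m * ind S x + g x := by funext x; simp [hg]
    have h3 : Φ f ≤ m * Φ (ind S) + Φ g := by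
      rw [← hhom m _ (hf z) hind]
      conv_lhs => rw [e]
      exact hadd _ _ (fun x => mul_nonneg (hf z) (hind x)) hg0
    have key : ∀ x y, |f x - f y| = m * |ind S x - ind S y| + |g x - g y| := by
      have hm0 : 0 ≤ m := hf z
      intro x y
      by_cases hx : x ∈ S <;> by_cases hy : y ∈ S
      · simp [hg, ind, hx, hy]
      · have := hmin x hx
        simp only [hg, ind, hx, hy, hfS y hy, if_true, if_false]
        rw [abs_of_nonneg (by linarith : (0:ℝ) ≤ f x - 0),
          abs_of_nonneg (by linarith : (0:ℝ) ≤ f x - m * 1 - (0 - m * 0))]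
        norm_num
      · have := hmin y hy
        simp only [hg, ind, hx, hy, hfS x hx, if_true, if_false]
        rw [abs_of_nonpos (by linarith : (0:ℝ) - f y ≤ 0),
          abs_of_nonpos (by linarith : (0 - m * 0 - (f y - m * 1) : ℝ) ≤ 0)]
        norm_num
      · simp [hg, ind, hx, hy, hfS]
    calc Φ f ≤ m * Φ (ind S) + Φ g := h3
      _ ≤ m * (∑ x ∈ W, ∑ y ∈ W, a x y * |ind S x - ind S y|) +
          ∑ x ∈ W, ∑ y ∈ W, a x y * |g x - g y| := by gcongr; exact hf z
      _ = _ := by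
        rw [Finset.mul_sum, ← Finset.sum_add_distrib]
        refine Finset.sum_congr rfl fun x _ => ?_
        rw [Finset.mul_sum, ← Finset.sum_add_distrib]
        refine Finset.sum_congr rfl fun y _ => ?_
        rw [key]; ring

/-- The number of boundary points is at most the number of boundary edges. -/
lemma card_le_sum_adj {V : Type*} (G : SimpleGraph V) {D A W : Finset V} (hD : D ⊆ A)
    (hA : A ⊆ W) (h : ∀ x ∈ D, ∃ y ∈ W, y ∉ A ∧ G.Adj x y) :
    (D.card : ℝ) ≤ ∑ x ∈ W, ∑ y ∈ W, adj G x y * |ind A x - ind A y| := by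
  have hterm : ∀ x y, 0 ≤ adj G x y * |ind A x - ind A y| :=
    fun x y => mul_nonneg (adj_nonneg G x y) (abs_nonneg _)
  calc (D.card : ℝ) = ∑ x ∈ D, (1 : ℝ) := by simp
    _ ≤ ∑ x ∈ D, ∑ y ∈ W, adj G x y * |ind A x - ind A y| := by
        refine Finset.sum_le_sum fun x hx => ?_
        obtain ⟨y, hyW, hyA, hxy⟩ := h x hx
        have : (1 : ℝ) = adj G x y * |ind A x - ind A y| := by
          simp [adj, ind, hxy, hyA, hD hx]
        rw [this]
        exact Finset.single_le_sum (f := fun y => adj G x y * |ind A x - ind A y|)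
          (fun y _ => hterm x y) hyW
    _ ≤ _ := Finset.sum_le_sum_of_subset_of_nonneg (hD.trans hA)
        fun x _ _ => Finset.sum_nonneg fun y _ => hterm x y

namespace ConductanceGraph

variable {V : Type} {d : ℕ} {Creg Criso : ℝ} (X : ConductanceGraph V d Creg Criso)

lemma mem_ball_symm {x y : V} {r : ℝ} : y ∈ X.ball x r ↔ x ∈ X.ball y r := by
  rw [X.mem_ball, X.mem_ball, SimpleGraph.dist_comm]

lemma ball_mono (x : V) {r r' : ℝ} (h : r ≤ r') : X.ball x r ⊆ X.ball x r' := by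
  intro y; rw [X.mem_ball, X.mem_ball]; intro h'; linarith

lemma dist_le_of_adj {x y z : V} (h : X.G.Adj y z) : X.G.dist x z ≤ X.G.dist x y + 1 := by
  have := X.connected.dist_triangle (u := x) (v := y) (w := z)
  rwa [SimpleGraph.dist_eq_one_iff_adj.2 h] at this

lemma abs_dist_sub_le_of_adj {x y z : V} (h : X.G.Adj y z) :
    |(X.G.dist x y : ℝ) - X.G.dist x z| ≤ 1 := by
  have h1 := X.dist_le_of_adj (x := x) h
  have h2 := X.dist_le_of_adj (x := x) h.symm
  have h1' : (X.G.dist x z : ℝ) ≤ X.G.dist x y + 1 := by exact_mod_cast h1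
  have h2' : (X.G.dist x y : ℝ) ≤ X.G.dist x z + 1 := by exact_mod_cast h2
  rw [abs_le]; constructor <;> linarith

lemma exists_adj_dist_lt {x y : V} (h : y ≠ x) : ∃ z, X.G.Adj y z ∧
    X.G.dist x z + 1 = X.G.dist x y := by
  obtain ⟨w, hw⟩ := X.connected.exists_walk_length_eq_dist y x
  cases w with
  | nil => exact absurd rfl h
  | @cons _ z _ hadj w =>
    refine ⟨z, hadj, ?_⟩
    have h1 : X.G.dist z x ≤ w.length := SimpleGraph.dist_le w
    rw [SimpleGraph.Walk.length_cons, SimpleGraph.dist_comm] at hw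
    rw [SimpleGraph.dist_comm] at h1
    have := X.dist_le_of_adj (x := x) hadj.symm
    omega

lemma nbr_subset_ball (x : V) : X.nbr x ⊆ X.ball x 1 := by
  intro y hy
  rw [X.mem_nbr] at hy
  rw [X.mem_ball, SimpleGraph.dist_eq_one_iff_adj.2 hy]
  norm_num

lemma one_le_Creg {V : Type} {d : ℕ} {Creg Criso : ℝ} (X : ConductanceGraph V d Creg Criso)
    (hCreg : 0 < Creg) (x : V) : 1 ≤ Creg := by
  have h := X.volume x 1 le_rfl
  rw [one_pow] at h
  have h1 : Creg⁻¹ ≤ Creg := by linarith [h.1, h.2]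
  by_contra hc
  push Not at hc
  have : 1 < Creg⁻¹ := (one_lt_inv₀ hCreg).2 hc
  linarith

/-- Isoperimetric inequality for all finite sets. -/
lemma global_isoperimetry (hd : 1 ≤ d) (hCreg : 0 < Creg) (hCriso : 0 < Criso) (A : Finset V)
    (hA : A.Nonempty) :
    (A.card : ℝ) ^ (1 - 1 / (d : ℝ)) ≤
      Creg ^ 2 * (3 * Creg) ^ (1 / (d : ℝ)) / Criso * (intBdry X.G A).card := by
  classical
  obtain ⟨a₀, ha₀⟩ := hA
  have hC1 := X.one_le_Creg hCreg a₀
  have hcard : (1 : ℝ) ≤ A.card := by exact_mod_cast Finset.card_pos.2 ⟨a₀, ha₀⟩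
  set r : ℝ := (3 * Creg * A.card) ^ (1 / (d : ℝ)) with hr
  have hbase : 1 ≤ 3 * Creg * A.card := by nlinarith
  have hr1 : 1 ≤ r := Real.one_le_rpow hbase (by positivity)
  have hrd : r ^ d = 3 * Creg * A.card := by
    rw [hr, ← Real.rpow_natCast, ← Real.rpow_mul (by linarith), one_div_mul_cancel, Real.rpow_one]
    exact_mod_cast (by omega : d ≠ 0)
  set Y : Finset V := A.biUnion fun z => X.ball z r with hY
  have hloc : ∀ x ∈ Y, Criso / r * ((A ∩ X.ball x r).card : ℝ) ≤
      ((intBdry X.G A ∩ X.ball x r).card : ℝ) := by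
    intro x _
    rcases (A ∩ X.ball x r).eq_empty_or_nonempty with h | h
    · rw [h]; simp
    have hlt : ((A ∩ X.ball x r).card : ℝ) < ((X.ball x r).card : ℝ) / 2 := by
      have h1 : ((A ∩ X.ball x r).card : ℝ) ≤ A.card := by
        exact_mod_cast Finset.card_le_card Finset.inter_subset_left
      have h2 := (X.volume x r hr1).1
      rw [hrd] at h2
      have h3 : Creg⁻¹ * (3 * Creg * A.card) = 3 * (A.card : ℝ) := by field_simp
      linarith
    have h4 := X.isoperimetry x r _ hr1 h Finset.inter_subset_right hlt
    have h5 : (0 : ℝ) < (A ∩ X.ball x r).card := by exact_mod_cast Finset.card_pos.2 h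
    rw [le_div_iff₀ h5] at h4
    refine h4.trans ?_
    norm_cast
    apply Finset.card_le_card
    intro z hz
    simp only [relBdry, intBdry, Finset.mem_filter, Finset.mem_inter] at hz ⊢
    obtain ⟨⟨hzA, hzB⟩, y, hyB, hyA, hzy⟩ := hz
    exact ⟨⟨hzA, y, fun h => hyA ⟨h, hyB⟩, hzy⟩, hzB⟩
  have hcount : ∀ S : Finset V, S ⊆ A →
      ∑ x ∈ Y, ((S ∩ X.ball x r).card : ℝ) = ∑ z ∈ S, ((X.ball z r).card : ℝ) := by
    intro S hS
    have e1 : ∀ x ∈ Y, ((S ∩ X.ball x r).card : ℝ) =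
        ∑ z ∈ S, if z ∈ X.ball x r then (1 : ℝ) else 0 := by
      intro x _
      rw [← Finset.sum_filter, Finset.sum_const, nsmul_eq_mul, mul_one, Finset.filter_mem_eq_inter]
    rw [Finset.sum_congr rfl e1, Finset.sum_comm]
    refine Finset.sum_congr rfl fun z hz => ?_
    rw [← Finset.sum_filter, Finset.sum_const, nsmul_eq_mul, mul_one]
    congr 2
    ext x
    rw [Finset.mem_filter, X.mem_ball_symm]
    constructor
    · exact fun h => h.2
    · exact fun h => ⟨Finset.mem_biUnion.2 ⟨z, hS hz, h⟩, h⟩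
  have hsub : intBdry X.G A ⊆ A := Finset.filter_subset _ _
  have hsum := Finset.sum_le_sum hloc
  rw [← Finset.mul_sum, hcount A (Finset.Subset.refl _), hcount _ hsub] at hsum
  have hlow : (A.card : ℝ) * (Creg⁻¹ * r ^ d) ≤ ∑ z ∈ A, ((X.ball z r).card : ℝ) := by
    rw [← nsmul_eq_mul]
    exact Finset.card_nsmul_le_sum _ _ _ fun z _ => (X.volume z r hr1).1
  have hup : ∑ z ∈ intBdry X.G A, ((X.ball z r).card : ℝ) ≤
      (intBdry X.G A).card * (Creg * r ^ d) := by
    rw [← nsmul_eq_mul]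
    exact Finset.sum_le_card_nsmul _ _ _ fun z _ => (X.volume z r hr1).2
  have hr0 : 0 < r := by linarith
  have hmain : Criso / r * ((A.card : ℝ) * (Creg⁻¹ * r ^ d)) ≤
      (intBdry X.G A).card * (Creg * r ^ d) := by
    refine le_trans ?_ (hsum.trans hup)
    gcongr
  have hmain2 : (A.card : ℝ) ≤ Creg ^ 2 * r / Criso * (intBdry X.G A).card := by
    have hrd0 : 0 < r ^ d := by positivity
    have e1 : Criso / r * ((A.card : ℝ) * (Creg⁻¹ * r ^ d)) =
      (Criso / (r * Creg) * A.card) * r ^ d := by field_simp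
    have e2 : (intBdry X.G A).card * (Creg * r ^ d) =
      ((intBdry X.G A).card * Creg) * r ^ d := by ring
    rw [e1, e2] at hmain
    have h6 := le_of_mul_le_mul_right hmain hrd0
    rw [div_mul_eq_mul_div, div_le_iff₀ (by positivity)] at h6
    rw [div_mul_eq_mul_div, le_div_iff₀ hCriso]
    nlinarith
  have hA0 : (0 : ℝ) < A.card := by linarith
  rw [Real.rpow_sub hA0, Real.rpow_one, div_le_iff₀ (by positivity)]
  calc (A.card : ℝ) ≤ _ := hmain2
    _ = _ := by
      rw [hr, Real.mul_rpow (by positivity) (by positivity)]; ring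

/-- `L¹` Sobolev inequality for functions supported in the interior of a ball. -/
lemma sobolev (hd : 2 ≤ d) (hCreg : 0 < Creg) (hCriso : 0 < Criso) (x₀ : V) (n : ℝ) (f : V → ℝ)
    (hf : ∀ x, 0 ≤ f x) (hf0 : ∀ x, x ∉ X.ball x₀ (n - 1) → f x = 0) :
    (∑ x ∈ X.ball x₀ n, f x ^ ((d : ℝ) / (d - 1))) ^ (1 - 1 / (d : ℝ)) ≤
      Creg ^ 2 * (3 * Creg) ^ (1 / (d : ℝ)) / Criso *
      ∑ x ∈ X.ball x₀ n, ∑ y ∈ X.ball x₀ n, adj X.G x y * |f x - f y| := by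
  classical
  have hd' : (2 : ℝ) ≤ d := by exact_mod_cast hd
  set B := X.ball x₀ n with hB
  set C := Creg ^ 2 * (3 * Creg) ^ (1 / (d : ℝ)) / Criso with hC
  have hC0 : 0 < C := by positivity
  set t : ℝ := (d : ℝ) / (d - 1) with ht
  have ht1 : 1 ≤ t := by rw [ht, le_div_iff₀ (by linarith)]; linarith
  have het : 1 - 1 / (d : ℝ) = 1 / t := by
    rw [ht]; field_simp
  have hin : X.ball x₀ (n - 1) ⊆ B := X.ball_mono x₀ (by linarith)
  have hmain := layer_cake B (adj X.G) (fun f => C⁻¹ * (∑ x ∈ B, f x ^ t) ^ (1 / t))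
    ?_ ?_ (fun A => A ⊆ X.ball x₀ (n - 1)) (fun A A' h h' => h.trans h') ?_
    (X.ball x₀ (n - 1)) (Finset.Subset.refl _) f hf hf0
  · rw [het]
    calc (∑ x ∈ B, f x ^ t) ^ (1 / t) = C * (C⁻¹ * (∑ x ∈ B, f x ^ t) ^ (1 / t)) := by
          field_simp
      _ ≤ _ := by gcongr
  · intro f g hf hg
    have := Real.Lp_add_le_of_nonneg B ht1 (fun x _ => hf x) (fun x _ => hg x)
    calc _ ≤ C⁻¹ * ((∑ x ∈ B, f x ^ t) ^ (1 / t) + (∑ x ∈ B, g x ^ t) ^ (1 / t)) := by gcongr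
      _ = _ := by ring
  · intro c f hc hf
    have e : ∑ x ∈ B, (c * f x) ^ t = c ^ t * ∑ x ∈ B, f x ^ t := by
      rw [Finset.mul_sum]
      exact Finset.sum_congr rfl fun x _ => Real.mul_rpow hc (hf x)
    rw [e, Real.mul_rpow (by positivity) (Finset.sum_nonneg fun x _ => Real.rpow_nonneg (hf x) _),
      ← Real.rpow_mul hc, mul_one_div_cancel (by positivity), Real.rpow_one]
    ring
  · intro A hA hne
    have e : ∑ x ∈ B, ind A x ^ t = A.card := by
      have e1 : ∀ x ∈ B, ind A x ^ t = if x ∈ A then 1 else 0 := by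
        intro x _
        by_cases h : x ∈ A
        · simp [ind, h]
        · simp [ind, h, Real.zero_rpow (by linarith : t ≠ 0)]
      rw [Finset.sum_congr rfl e1, ← Finset.sum_filter, Finset.sum_const, nsmul_eq_mul, mul_one,
        Finset.filter_mem_eq_inter, Finset.inter_eq_right.2 (hA.trans hin)]
    rw [e, ← het]
    have h1 := X.global_isoperimetry (by omega) hCreg hCriso A hne
    have h2 := card_le_sum_adj X.G (D := intBdry X.G A) (A := A) (W := B)
      (Finset.filter_subset _ _) (hA.trans hin) (by
        intro x hx
        simp only [intBdry, Finset.mem_filter] at hx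
        obtain ⟨hxA, y, hyA, hxy⟩ := hx
        refine ⟨y, ?_, hyA, hxy⟩
        have h3 := (X.mem_ball _ _ _).1 (hA hxA)
        rw [hB, X.mem_ball]
        have h4 : (X.G.dist x₀ y : ℝ) ≤ X.G.dist x₀ x + 1 := by
          exact_mod_cast X.dist_le_of_adj (x := x₀) hxy
        linarith)
    calc _ ≤ C⁻¹ * (C * (intBdry X.G A).card) := by gcongr
      _ = (intBdry X.G A).card := by field_simp
      _ ≤ _ := h2

/-- A subset of a ball without relative boundary is empty or the whole ball. -/
lemma relBdry_nonempty (x₀ : V) (r : ℝ) (A : Finset V) (hne : A.Nonempty)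
    (hA : A ⊆ X.ball x₀ r) (hlt : A.card < (X.ball x₀ r).card) :
    (relBdry X.G (X.ball x₀ r) A).Nonempty := by
  classical
  by_contra hempty
  rw [Finset.not_nonempty_iff_eq_empty] at hempty
  have hno : ∀ x ∈ X.ball x₀ r, ∀ y ∈ X.ball x₀ r, X.G.Adj x y → (x ∈ A ↔ y ∈ A) := by
    have : ∀ x ∈ X.ball x₀ r, ∀ y ∈ X.ball x₀ r, X.G.Adj x y → x ∈ A → y ∈ A := by
      intro x _ y hy hxy hxA
      by_contra hyA
      have : x ∈ relBdry X.G (X.ball x₀ r) A := by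
        simp only [relBdry, Finset.mem_filter]
        exact ⟨hxA, y, hy, hyA, hxy⟩
      rw [hempty] at this
      simp at this
    exact fun x hx y hy hxy => ⟨this x hx y hy hxy, this y hy x hx hxy.symm⟩
  have hall : ∀ k : ℕ, ∀ y ∈ X.ball x₀ r, X.G.dist x₀ y = k → (y ∈ A ↔ x₀ ∈ A) := by
    intro k
    induction k with
    | zero =>
      intro y _ hy
      rw [X.connected.dist_eq_zero_iff] at hy
      rw [hy]
    | succ k ih =>
      intro y hyB hy
      have hne : y ≠ x₀ := by rintro rfl; simp at hy
      obtain ⟨z, hyz, hz⟩ := X.exists_adj_dist_lt hne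
      have hzB : z ∈ X.ball x₀ r := by
        rw [X.mem_ball] at hyB ⊢
        have : (X.G.dist x₀ z : ℝ) ≤ X.G.dist x₀ y := by exact_mod_cast (by omega)
        linarith
      rw [hno y hyB z hzB hyz, ih z hzB (by omega)]
  obtain ⟨a, ha⟩ := hne
  have hx₀ : x₀ ∈ A := (hall _ a (hA ha) rfl).1 ha
  have : X.ball x₀ r ⊆ A := fun y hy => (hall _ y hy rfl).2 hx₀
  have := Finset.card_le_card this
  omega

/-- Relative isoperimetric inequality including sets of exactly half the volume. -/
lemma relative_isoperimetry (hCreg : 0 < Creg) (hCriso : 0 < Criso) (x₀ : V) (r : ℝ) (hr : 1 ≤ r)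
    (A : Finset V) (hne : A.Nonempty) (hA : A ⊆ X.ball x₀ r)
    (hle : 2 * A.card ≤ (X.ball x₀ r).card) :
    (A.card : ℝ) ≤ ((1 + Creg) / Criso + 1) * r * (relBdry X.G (X.ball x₀ r) A).card := by
  classical
  have hcard : 0 < A.card := Finset.card_pos.2 hne
  obtain ⟨z, hz⟩ := X.relBdry_nonempty x₀ r A hne hA (by omega)
  set D := relBdry X.G (X.ball x₀ r) A with hD
  have hD1 : (1 : ℝ) ≤ D.card := by exact_mod_cast Finset.card_pos.2 ⟨z, hz⟩
  have hzA : z ∈ A := (Finset.mem_filter.1 hz).1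
  have hcard' : ((A.erase z).card : ℝ) = A.card - 1 := by
    rw [Finset.card_erase_of_mem hzA, Nat.cast_sub (by omega)]; simp
  have hle' : 2 * (A.card : ℝ) ≤ (X.ball x₀ r).card := by exact_mod_cast hle
  have hsub : ((A.erase z).card : ℝ) ≤ (1 + Creg) / Criso * r * D.card := by
    rcases (A.erase z).eq_empty_or_nonempty with h | h
    · rw [h]; simp; positivity
    have h1 := X.isoperimetry x₀ r _ hr h ((Finset.erase_subset _ _).trans hA) (by linarith)
    have h5 : (0 : ℝ) < (A.erase z).card := by exact_mod_cast Finset.card_pos.2 h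
    rw [le_div_iff₀ h5] at h1
    have h2 : relBdry X.G (X.ball x₀ r) (A.erase z) ⊆ D ∪ X.nbr z := by
      intro x hx
      simp only [relBdry, Finset.mem_filter, Finset.mem_erase] at hx
      obtain ⟨⟨hxz, hxA⟩, y, hyB, hyA, hxy⟩ := hx
      rw [Finset.mem_union, X.mem_nbr]
      by_cases hyz : y = z
      · right; rw [← hyz]; exact hxy.symm
      · left
        simp only [hD, relBdry, Finset.mem_filter]
        exact ⟨hxA, y, hyB, fun h => hyA ⟨hyz, h⟩, hxy⟩
    have h3 : ((relBdry X.G (X.ball x₀ r) (A.erase z)).card : ℝ) ≤ D.card + Creg := by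
      have h4 := Finset.card_le_card h2
      have h6 := Finset.card_union_le D (X.nbr z)
      have h7 := Finset.card_le_card (X.nbr_subset_ball z)
      have h8 := (X.volume z 1 le_rfl).2
      rw [one_pow, mul_one] at h8
      have h9 : ((relBdry X.G (X.ball x₀ r) (A.erase z)).card : ℝ) ≤
        D.card + (X.ball z 1).card := by exact_mod_cast (by omega)
      linarith
    have h10 : Criso / r * (A.erase z).card ≤ (1 + Creg) * D.card := by nlinarith
    rw [div_mul_eq_mul_div, div_le_iff₀ (by linarith)] at h10
    rw [div_mul_eq_mul_div, div_mul_eq_mul_div, le_div_iff₀ hCriso]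
    nlinarith
  have : (1 : ℝ) ≤ r * D.card := by nlinarith
  nlinarith

/-- Existence of a median. -/
lemma _root_.EllipticHarnack.exists_median {V : Type*} (B : Finset V) (hB : B.Nonempty)
    (v : V → ℝ) :
    ∃ c, 2 * (B.filter fun x => c < v x).card ≤ B.card ∧
      2 * (B.filter fun x => v x < c).card ≤ B.card := by
  classical
  set S := B.filter fun x => 2 * (B.filter fun y => v x < v y).card ≤ B.card with hS
  have hSne : S.Nonempty := by
    obtain ⟨x, hx, hmax⟩ := B.exists_max_image v hB
    refine ⟨x, Finset.mem_filter.2 ⟨hx, ?_⟩⟩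
    have : B.filter (fun y => v x < v y) = ∅ := by
      rw [Finset.filter_eq_empty_iff]
      intro y hy
      exact not_lt.2 (hmax y hy)
    rw [this]; simp
  obtain ⟨z, hz, hmin⟩ := S.exists_min_image v hSne
  refine ⟨v z, (Finset.mem_filter.1 hz).2, ?_⟩
  rcases (B.filter fun x => v x < v z).eq_empty_or_nonempty with h | h
  · rw [h]; simp
  obtain ⟨w, hw, hmaxw⟩ := Finset.exists_max_image _ v h
  rw [Finset.mem_filter] at hw
  have hwS : w ∉ S := fun h' => absurd (hmin w h') (not_le.2 hw.2)
  have hw2 : ¬ 2 * (B.filter fun y => v w < v y).card ≤ B.card := by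
    intro h'; exact hwS (Finset.mem_filter.2 ⟨hw.1, h'⟩)
  have hdisj : Disjoint (B.filter fun x => v x < v z) (B.filter fun y => v w < v y) := by
    rw [Finset.disjoint_left]
    intro x hx hx'
    have := hmaxw x hx
    have := (Finset.mem_filter.1 hx').2
    linarith
  have h1 := Finset.card_union_of_disjoint hdisj
  have h2 : ((B.filter fun x => v x < v z) ∪ (B.filter fun y => v w < v y)).card ≤ B.card :=
    Finset.card_le_card (Finset.union_subset (Finset.filter_subset _ _) (Finset.filter_subset _ _))
  omega

/-- `L¹` Poincaré inequality for nonnegative functions supported on half of a ball. -/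
lemma poincare_of_support (hCreg : 0 < Creg) (hCriso : 0 < Criso) (x₀ : V) (r : ℝ) (hr : 1 ≤ r)
    (S : Finset V) (hS : S ⊆ X.ball x₀ r) (hS2 : 2 * S.card ≤ (X.ball x₀ r).card)
    (f : V → ℝ) (hf : ∀ x, 0 ≤ f x) (hfS : ∀ x, x ∉ S → f x = 0) :
    ∑ x ∈ X.ball x₀ r, f x ≤ ((1 + Creg) / Criso + 1) * r *
      ∑ x ∈ X.ball x₀ r, ∑ y ∈ X.ball x₀ r, adj X.G x y * |f x - f y| := by
  classical
  set B := X.ball x₀ r with hB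
  set C := ((1 + Creg) / Criso + 1) * r with hC
  have hC0 : 0 < C := by positivity
  have hmain := layer_cake B (adj X.G) (fun f => C⁻¹ * ∑ x ∈ B, f x)
    ?_ ?_ (fun A => A ⊆ B ∧ 2 * A.card ≤ B.card)
    (fun A A' h h' => ⟨h.trans h'.1, by have := Finset.card_le_card h; omega⟩) ?_
    S ⟨hS, hS2⟩ f hf hfS
  · calc ∑ x ∈ B, f x = C * (C⁻¹ * ∑ x ∈ B, f x) := by field_simp
      _ ≤ _ := by gcongr
  · intro f g hf hg
    rw [Finset.sum_add_distrib, mul_add]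
  · intro c f hc hf
    rw [← Finset.mul_sum]; ring
  · rintro A ⟨hA, hA2⟩ hne
    have e : ∑ x ∈ B, ind A x = A.card := by
      simp only [ind]
      rw [← Finset.sum_filter, Finset.sum_const, nsmul_eq_mul, mul_one,
        Finset.filter_mem_eq_inter, Finset.inter_eq_right.2 hA]
    rw [e]
    have h1 := X.relative_isoperimetry hCreg hCriso x₀ r hr A hne hA hA2
    have h2 := card_le_sum_adj X.G (D := relBdry X.G B A) (A := A) (W := B)
      (Finset.filter_subset _ _) hA (by
        intro x hx
        simp only [relBdry, Finset.mem_filter] at hx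
        exact hx.2)
    calc _ ≤ C⁻¹ * (C * (relBdry X.G B A).card) := by gcongr
      _ = (relBdry X.G B A).card := by field_simp
      _ ≤ _ := h2

/-- `L¹` Poincaré inequality for both parts of the deviation from a median. -/
lemma poincare (hCreg : 0 < Creg) (hCriso : 0 < Criso) (x₀ : V) (r : ℝ) (hr : 1 ≤ r)
    (v : V → ℝ) : ∃ c, ∀ ε : ℝ, ε = 1 ∨ ε = -1 →
    ∑ x ∈ X.ball x₀ r, max 0 (ε * (v x - c)) ≤ ((1 + Creg) / Criso + 1) * r *
      ∑ x ∈ X.ball x₀ r, ∑ y ∈ X.ball x₀ r, adj X.G x y * |v x - v y| := by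
  classical
  have hne : (X.ball x₀ r).Nonempty := ⟨x₀, by rw [X.mem_ball]; simp; linarith⟩
  obtain ⟨c, hc1, hc2⟩ := exists_median (X.ball x₀ r) hne v
  refine ⟨c, fun ε hε => ?_⟩
  set B := X.ball x₀ r with hB
  set S := B.filter fun x => 0 < ε * (v x - c) with hS
  have hScard : 2 * S.card ≤ B.card := by
    rcases hε with rfl | rfl
    · simpa [hS] using hc1
    · simpa [hS] using hc2
  have h1 := X.poincare_of_support hCreg hCriso x₀ r hr S (Finset.filter_subset _ _) hScard
    (fun x => if x ∈ B then max 0 (ε * (v x - c)) else 0)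
    (fun x => by split_ifs; exacts [le_max_left _ _, le_rfl])
    (fun x hx => by
      split_ifs with h
      · exact max_eq_left (not_lt.1 fun h' => hx (Finset.mem_filter.2 ⟨h, h'⟩))
      · rfl)
  rw [← hB] at h1
  calc ∑ x ∈ B, max 0 (ε * (v x - c)) =
      ∑ x ∈ B, (if x ∈ B then max 0 (ε * (v x - c)) else 0) :=
        Finset.sum_congr rfl fun x hx => by rw [if_pos hx]
    _ ≤ _ := h1
    _ ≤ _ := by
      have : 0 ≤ ((1 + Creg) / Criso + 1) * r := by positivity
      refine mul_le_mul_of_nonneg_left (Finset.sum_le_sum fun x hx => Finset.sum_le_sum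
        fun y hy => mul_le_mul_of_nonneg_left ?_ (adj_nonneg _ _ _)) this
      rw [if_pos hx, if_pos hy]
      have h2 := abs_max_sub_max_le_abs (ε * (v x - c)) (ε * (v y - c)) 0
      rw [max_comm 0, max_comm 0]
      refine h2.trans (le_of_eq ?_)
      rw [← mul_sub, abs_mul]
      have : |ε| = 1 := by rcases hε with rfl | rfl <;> simp
      rw [this, one_mul]; congr 1; ring

end ConductanceGraph

lemma adj_symm {V : Type*} (G : SimpleGraph V) (x y : V) : adj G x y = adj G y x := by
  unfold adj; rw [G.adj_comm]

namespace ConductanceGraph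

variable {V : Type} {d : ℕ} {Creg Criso : ℝ} (X : ConductanceGraph V d Creg Criso)

lemma nonneg_weight (x y : V) : 0 ≤ X.ω x y := by
  by_cases h : X.G.Adj x y
  · exact (X.pos x y h).le
  · rw [X.zero x y h]

lemma mu_nonneg (x : V) : 0 ≤ mu X.nbr X.ω x := Finset.sum_nonneg fun y _ => X.nonneg_weight x y

lemma nu_nonneg (x : V) : 0 ≤ nu X.nbr X.ω x :=
  Finset.sum_nonneg fun y _ => inv_nonneg.2 (X.nonneg_weight x y)

lemma sum_le_sum_nbr (A : Finset V) (x : V) (g : V → ℝ) (hg : ∀ y, 0 ≤ g y)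
    (hg0 : ∀ y, ¬ X.G.Adj x y → g y = 0) : ∑ y ∈ A, g y ≤ ∑ y ∈ X.nbr x, g y := by
  classical
  calc ∑ y ∈ A, g y = ∑ y ∈ A with y ∈ X.nbr x, g y := by
        symm
        apply Finset.sum_filter_of_ne
        intro y _ hy
        rw [X.mem_nbr]
        by_contra h
        exact hy (hg0 y h)
    _ ≤ _ := Finset.sum_le_sum_of_subset_of_nonneg
        (fun y hy => (Finset.mem_filter.1 hy).2) fun y _ _ => hg y

lemma sum_weight_le_mu (A : Finset V) (x : V) : ∑ y ∈ A, X.ω x y ≤ mu X.nbr X.ω x :=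
  X.sum_le_sum_nbr A x _ (X.nonneg_weight x) (X.zero x)

lemma sum_inv_weight_le_nu (A : Finset V) (x : V) : ∑ y ∈ A, (X.ω x y)⁻¹ ≤ nu X.nbr X.ω x :=
  X.sum_le_sum_nbr A x _ (fun y => inv_nonneg.2 (X.nonneg_weight x y))
    fun y h => by rw [X.zero x y h, inv_zero]

/-- The Dirichlet energy of `f` on `A`, each edge being counted twice. -/
def energy (A : Finset V) (f : V → ℝ) : ℝ := ∑ x ∈ A, ∑ y ∈ A, X.ω x y * (f x - f y) ^ 2

lemma energy_nonneg (A : Finset V) (f : V → ℝ) : 0 ≤ X.energy A f :=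
  Finset.sum_nonneg fun x _ => Finset.sum_nonneg fun y _ =>
    mul_nonneg (X.nonneg_weight x y) (sq_nonneg _)

lemma sq_sum_adj_le (A : Finset V) (a f : V → ℝ) :
    (∑ x ∈ A, ∑ y ∈ A, adj X.G x y * (a x * |f x - f y|)) ^ 2 ≤
      (∑ x ∈ A, nu X.nbr X.ω x * a x ^ 2) * X.energy A f := by
  have h1 := Finset.sum_sq_le_sum_mul_sum_of_sq_le_mul (A ×ˢ A)
    (r := fun z => adj X.G z.1 z.2 * (a z.1 * |f z.1 - f z.2|))
    (f := fun z => (X.ω z.1 z.2)⁻¹ * a z.1 ^ 2)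
    (g := fun z => X.ω z.1 z.2 * (f z.1 - f z.2) ^ 2)
    (fun z _ => mul_nonneg (inv_nonneg.2 (X.nonneg_weight _ _)) (sq_nonneg _))
    (fun z _ => mul_nonneg (X.nonneg_weight _ _) (sq_nonneg _))
    (fun z _ => by
      by_cases h : X.G.Adj z.1 z.2
      · have := X.pos _ _ h
        simp only [adj, h, if_true]
        rw [one_mul, mul_pow, sq_abs]
        apply le_of_eq
        field_simp
      · simp [adj, h, X.zero _ _ h])
  rw [Finset.sum_product, Finset.sum_product, Finset.sum_product] at h1
  refine h1.trans ?_
  refine mul_le_mul_of_nonneg_right ?_ (X.energy_nonneg A f)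
  refine Finset.sum_le_sum fun x _ => ?_
  dsimp only
  rw [← Finset.sum_mul]
  exact mul_le_mul_of_nonneg_right (X.sum_inv_weight_le_nu A x) (sq_nonneg _)

/-- Sobolev inequality for degenerate weights. -/
lemma weighted_sobolev (hd : 2 ≤ d) (hCreg : 0 < Creg) (hCriso : 0 < Criso) {q ρ : ℝ}
    (hq : 1 < q) (hρ : 0 < ρ) (hρq : 1 / ρ = 1 - 2 / (d : ℝ) + 1 / q) (x₀ : V) (n : ℝ) (f : V → ℝ)
    (hf : ∀ x, 0 ≤ f x) (hf0 : ∀ x, x ∉ X.ball x₀ (n - 1) → f x = 0) :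
    (∑ x ∈ X.ball x₀ n, f x ^ (2 * ρ)) ^ (1 / ρ) ≤
      4 * (Creg ^ 2 * (3 * Creg) ^ (1 / (d : ℝ)) / Criso) ^ 2 * (1 + ρ * (1 - 1 / q)) ^ 2 *
        (∑ x ∈ X.ball x₀ n, nu X.nbr X.ω x ^ q) ^ (1 / q) * X.energy (X.ball x₀ n) f := by
  have hd' : (2 : ℝ) ≤ d := by exact_mod_cast hd
  have hq1 : 1 / q < 1 := by rw [div_lt_one (by linarith)]; exact hq
  set S := Creg ^ 2 * (3 * Creg) ^ (1 / (d : ℝ)) / Criso with hS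
  have hS0 : 0 < S := by positivity
  set s := 1 + ρ * (1 - 1 / q) with hs
  have hs1 : 1 ≤ s := by nlinarith
  set B := X.ball x₀ n with hB
  set T := ∑ x ∈ B, f x ^ (2 * ρ) with hT
  have hT0 : 0 ≤ T := Finset.sum_nonneg fun x _ => Real.rpow_nonneg (hf x) _
  set N := (∑ x ∈ B, nu X.nbr X.ω x ^ q) ^ (1 / q) with hN
  have hN0 : 0 ≤ N := Real.rpow_nonneg
    (Finset.sum_nonneg fun x _ => Real.rpow_nonneg (X.nu_nonneg x) _) _
  have hE0 := X.energy_nonneg B f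
  rcases hT0.eq_or_lt with h0 | hTpos
  · rw [← h0, Real.zero_rpow (by positivity)]; positivity
  have hmul : ρ * (1 - 2 / (d : ℝ) + 1 / q) = 1 := by
    rw [← hρq]; field_simp
  have hsd : s * ((d : ℝ) / (d - 1)) = 2 * ρ := by
    have e : s = ρ * (2 - 2 / (d : ℝ)) := by rw [hs]; linarith
    rw [e]
    have : (d : ℝ) - 1 ≠ 0 := by linarith
    field_simp
  have h1 := X.sobolev hd hCreg hCriso x₀ n (fun x => f x ^ s)
    (fun x => Real.rpow_nonneg (hf x) _)
    (fun x hx => by simp only [hf0 x hx]; exact Real.zero_rpow (by linarith))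
  rw [← hB, ← hS] at h1
  have e1 : ∑ x ∈ B, (f x ^ s) ^ ((d : ℝ) / (d - 1)) = T := by
    refine Finset.sum_congr rfl fun x _ => ?_
    rw [← Real.rpow_mul (hf x), hsd]
  simp only [e1] at h1
  set J := ∑ x ∈ B, ∑ y ∈ B, adj X.G x y * (f x ^ (s - 1) * |f x - f y|) with hJ
  have h2 : ∑ x ∈ B, ∑ y ∈ B, adj X.G x y * |f x ^ s - f y ^ s| ≤ 2 * s * J := by
    have hsym : ∑ x ∈ B, ∑ y ∈ B, adj X.G x y * (f y ^ (s - 1) * |f x - f y|) = J := by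
      rw [Finset.sum_comm]
      refine Finset.sum_congr rfl fun x _ => Finset.sum_congr rfl fun y _ => ?_
      rw [abs_sub_comm, adj_symm]
    calc ∑ x ∈ B, ∑ y ∈ B, adj X.G x y * |f x ^ s - f y ^ s| ≤
        ∑ x ∈ B, ∑ y ∈ B, (s * (adj X.G x y * (f x ^ (s - 1) * |f x - f y|)) +
          s * (adj X.G x y * (f y ^ (s - 1) * |f x - f y|))) := by
          refine Finset.sum_le_sum fun x _ => Finset.sum_le_sum fun y _ => ?_
          calc _ ≤ adj X.G x y * (s * ((f x ^ (s - 1) + f y ^ (s - 1)) * |f x - f y|)) :=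
                mul_le_mul_of_nonneg_left (abs_rpow_sub_rpow_le (hf x) (hf y) hs1)
                  (adj_nonneg _ _ _)
            _ = _ := by ring
      _ = s * J + s * J := by
          simp_rw [Finset.sum_add_distrib, ← Finset.mul_sum]
          rw [hsym]
      _ = _ := by ring
  have h3 := X.sq_sum_adj_le B (fun x => f x ^ (s - 1)) f
  rw [← hJ] at h3
  have hconj : q.HolderConjugate (q / (q - 1)) := by
    have := Real.HolderConjugate.conjExponent hq
    simpa [Real.conjExponent] using this
  have h4 : ∑ x ∈ B, nu X.nbr X.ω x * (f x ^ (s - 1)) ^ 2 ≤ N * T ^ (1 - 1 / q) := by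
    have := Real.inner_le_Lp_mul_Lq_of_nonneg B hconj
      (f := nu X.nbr X.ω) (g := fun x => (f x ^ (s - 1)) ^ 2)
      (fun x _ => X.nu_nonneg x) (fun x _ => sq_nonneg _)
    refine this.trans (le_of_eq ?_)
    congr 1
    have e2 : 1 / (q / (q - 1)) = 1 - 1 / q := by
      have : q - 1 ≠ 0 := by linarith
      field_simp
    rw [e2]
    congr 1
    refine Finset.sum_congr rfl fun x _ => ?_
    rw [← Real.rpow_natCast, ← Real.rpow_mul (hf x), ← Real.rpow_mul (hf x)]
    congr 1
    have : q - 1 ≠ 0 := by linarith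
    rw [hs]
    push_cast
    field_simp
    ring
  have h5 : T ^ (1 - 1 / (d : ℝ)) ≤ 2 * S * s * J := by
    calc _ ≤ _ := h1
      _ ≤ S * (2 * s * J) := by gcongr
      _ = _ := by ring
  have h6 : (T ^ (1 - 1 / (d : ℝ))) ^ 2 ≤ 4 * S ^ 2 * s ^ 2 * N * X.energy B f * T ^ (1 - 1 / q) := by
    calc (T ^ (1 - 1 / (d : ℝ))) ^ 2 ≤ (2 * S * s * J) ^ 2 := by gcongr
      _ = 4 * S ^ 2 * s ^ 2 * J ^ 2 := by ring
      _ ≤ 4 * S ^ 2 * s ^ 2 * ((N * T ^ (1 - 1 / q)) * X.energy B f) := by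
          gcongr
          exact h3.trans (mul_le_mul_of_nonneg_right h4 hE0)
      _ = _ := by ring
  have h7 : (T ^ (1 - 1 / (d : ℝ))) ^ 2 = T ^ (1 / ρ) * T ^ (1 - 1 / q) := by
    rw [← Real.rpow_natCast, ← Real.rpow_mul hT0, ← Real.rpow_add hTpos, hρq]
    congr 1
    push_cast
    ring
  rw [h7] at h6
  exact le_of_mul_le_mul_right h6 (Real.rpow_pos_of_pos hTpos _)

/-- Testing harmonicity against functions supported in the interior of the ball. -/
lemma sum_test_eq_zero (x₀ : V) (n : ℝ) (u φ : V → ℝ)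
    (hu : ∀ x ∈ X.ball x₀ n, lap X.nbr X.ω u x = 0) (hφ : ∀ x, x ∉ X.ball x₀ (n - 1) → φ x = 0) :
    ∑ x ∈ X.ball x₀ n, ∑ y ∈ X.ball x₀ n, X.ω x y * ((φ x - φ y) * (u x - u y)) = 0 := by
  classical
  set B := X.ball x₀ n with hB
  have hzero : ∀ x ∈ B, ∑ y ∈ B, X.ω x y * (φ x * (u x - u y)) = 0 := by
    intro x hx
    by_cases hx' : x ∈ X.ball x₀ (n - 1)
    · have hsub : X.nbr x ⊆ B := by
        intro y hy
        rw [X.mem_nbr] at hy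
        rw [X.mem_ball] at hx'
        rw [hB, X.mem_ball]
        have : (X.G.dist x₀ y : ℝ) ≤ X.G.dist x₀ x + 1 := by
          exact_mod_cast X.dist_le_of_adj (x := x₀) hy
        linarith
      rw [← Finset.sum_subset hsub (fun y _ hy => by
        rw [X.mem_nbr] at hy
        rw [X.zero x y hy, zero_mul])]
      have h1 := hu x hx
      unfold lap at h1
      have h2 : ∑ y ∈ X.nbr x, X.ω x y * (u y - u x) = 0 := by
        rcases mul_eq_zero.1 h1 with h | h
        · have h3 : mu X.nbr X.ω x = 0 := inv_eq_zero.1 h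
          unfold mu at h3
          rw [Finset.sum_eq_zero_iff_of_nonneg fun y _ => X.nonneg_weight x y] at h3
          exact Finset.sum_eq_zero fun y hy => by rw [h3 y hy, zero_mul]
        · exact h
      calc ∑ y ∈ X.nbr x, X.ω x y * (φ x * (u x - u y)) =
          -(φ x) * ∑ y ∈ X.nbr x, X.ω x y * (u y - u x) := by
            rw [Finset.mul_sum]
            exact Finset.sum_congr rfl fun y _ => by ring
        _ = 0 := by rw [h2, mul_zero]
    · simp [hφ x hx']
  have h1 : ∑ x ∈ B, ∑ y ∈ B, X.ω x y * (φ x * (u x - u y)) = 0 := Finset.sum_eq_zero hzero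
  have h2 : ∑ x ∈ B, ∑ y ∈ B, X.ω x y * (φ y * (u y - u x)) = 0 := by
    rw [Finset.sum_comm, ← h1]
    exact Finset.sum_congr rfl fun x _ => Finset.sum_congr rfl fun y _ => by rw [X.symm]
  calc _ = ∑ x ∈ B, ∑ y ∈ B, (X.ω x y * (φ x * (u x - u y)) + X.ω x y * (φ y * (u y - u x))) :=
        Finset.sum_congr rfl fun x _ => Finset.sum_congr rfl fun y _ => by ring
    _ = 0 := by simp_rw [Finset.sum_add_distrib]; rw [h1, h2, add_zero]

/-- Radial cutoff function which is `1` up to distance `R₁` and `0` from distance `R₂` on. -/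
def cutoff (x₀ : V) (R₁ R₂ : ℝ) (x : V) : ℝ :=
  min 1 (max 0 ((R₂ - X.G.dist x₀ x) / (R₂ - R₁)))

lemma cutoff_nonneg (x₀ : V) (R₁ R₂ : ℝ) (x : V) : 0 ≤ X.cutoff x₀ R₁ R₂ x :=
  le_min zero_le_one (le_max_left _ _)

lemma cutoff_eq_one {x₀ : V} {R₁ R₂ : ℝ} (h : R₁ < R₂) {x : V} (hx : x ∈ X.ball x₀ R₁) :
    X.cutoff x₀ R₁ R₂ x = 1 := by
  rw [X.mem_ball] at hx
  refine min_eq_left (le_max_of_le_right ?_)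
  rw [le_div_iff₀ (by linarith)]
  linarith

lemma cutoff_eq_zero {x₀ : V} {R₁ R₂ : ℝ} (h : R₁ < R₂) {x : V} (hx : x ∉ X.ball x₀ R₂) :
    X.cutoff x₀ R₁ R₂ x = 0 := by
  rw [X.mem_ball, not_le] at hx
  unfold cutoff
  rw [max_eq_left, min_eq_right zero_le_one]
  exact div_nonpos_of_nonpos_of_nonneg (by linarith) (by linarith)

lemma sq_cutoff_sub_le {x₀ : V} {R₁ R₂ : ℝ} (h : R₁ < R₂) {x y : V} (hxy : X.G.Adj x y) :
    (X.cutoff x₀ R₁ R₂ x - X.cutoff x₀ R₁ R₂ y) ^ 2 ≤ 1 / (R₂ - R₁) ^ 2 := by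
  have h0 : 0 < R₂ - R₁ := by linarith
  have h1 : |X.cutoff x₀ R₁ R₂ x - X.cutoff x₀ R₁ R₂ y| ≤ 1 / (R₂ - R₁) := by
    unfold cutoff
    refine (abs_min_sub_min_le_max _ _ _ _).trans ?_
    rw [sub_self, abs_zero]
    refine max_le (by positivity) ((abs_max_sub_max_le_max _ _ _ _).trans ?_)
    rw [sub_self, abs_zero]
    refine max_le (by positivity) ?_
    rw [← sub_div, abs_div, abs_of_pos h0]
    gcongr
    have := X.abs_dist_sub_le_of_adj (x := x₀) hxy
    rw [abs_sub_comm] at this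
    rwa [sub_sub_sub_cancel_left]
  rw [← sq_abs, ← one_div_pow]
  gcongr

end ConductanceGraph

namespace ConductanceGraph

variable {V : Type} {d : ℕ} {Creg Criso : ℝ} (X : ConductanceGraph V d Creg Criso)

lemma sum_sq_cutoff_sub_mul_le {x₀ : V} {R₁ R₂ r : ℝ} (h : R₁ < R₂) (hr : R₂ + 1 ≤ r)
    (B : Finset V) (w : V → ℝ) (hw : ∀ x, 0 ≤ w x) :
    ∑ x ∈ B, ∑ y ∈ B, X.ω x y * ((X.cutoff x₀ R₁ R₂ x - X.cutoff x₀ R₁ R₂ y) ^ 2 * w x) ≤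
      1 / (R₂ - R₁) ^ 2 * ∑ x ∈ X.ball x₀ r, mu X.nbr X.ω x * w x := by
  classical
  have hrow : ∀ x, ∑ y ∈ B, X.ω x y * ((X.cutoff x₀ R₁ R₂ x - X.cutoff x₀ R₁ R₂ y) ^ 2 * w x) ≤
      if x ∈ X.ball x₀ r then 1 / (R₂ - R₁) ^ 2 * (mu X.nbr X.ω x * w x) else 0 := by
    intro x
    split_ifs with hx
    · calc _ ≤ ∑ y ∈ B, X.ω x y * (1 / (R₂ - R₁) ^ 2 * w x) := by
            refine Finset.sum_le_sum fun y _ => ?_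
            by_cases hxy : X.G.Adj x y
            · exact mul_le_mul_of_nonneg_left (mul_le_mul_of_nonneg_right
                (X.sq_cutoff_sub_le h hxy) (hw x)) (X.nonneg_weight x y)
            · simp [X.zero x y hxy]
        _ = (∑ y ∈ B, X.ω x y) * (1 / (R₂ - R₁) ^ 2 * w x) := by rw [Finset.sum_mul]
        _ ≤ mu X.nbr X.ω x * (1 / (R₂ - R₁) ^ 2 * w x) :=
            mul_le_mul_of_nonneg_right (X.sum_weight_le_mu B x)
              (mul_nonneg (by positivity) (hw x))
        _ = _ := by ring
    · apply le_of_eq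
      refine Finset.sum_eq_zero fun y _ => ?_
      by_cases hxy : X.G.Adj x y
      · have h1 := abs_le.1 (X.abs_dist_sub_le_of_adj (x := x₀) hxy)
        rw [X.mem_ball, not_le] at hx
        rw [X.cutoff_eq_zero h (x := x) (by rw [X.mem_ball]; linarith),
          X.cutoff_eq_zero h (x := y) (by rw [X.mem_ball]; linarith [h1.2])]
        simp
      · simp [X.zero x y hxy]
  calc _ ≤ ∑ x ∈ B, if x ∈ X.ball x₀ r then 1 / (R₂ - R₁) ^ 2 * (mu X.nbr X.ω x * w x) else 0 :=
        Finset.sum_le_sum fun x _ => hrow x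
    _ = ∑ x ∈ B with x ∈ X.ball x₀ r, 1 / (R₂ - R₁) ^ 2 * (mu X.nbr X.ω x * w x) := by
        rw [Finset.sum_filter]
    _ ≤ ∑ x ∈ X.ball x₀ r, 1 / (R₂ - R₁) ^ 2 * (mu X.nbr X.ω x * w x) :=
        Finset.sum_le_sum_of_subset_of_nonneg (fun y hy => (Finset.mem_filter.1 hy).2)
          fun x _ _ => mul_nonneg (by positivity) (mul_nonneg (X.mu_nonneg x) (hw x))
    _ = _ := by rw [Finset.mul_sum]

/-- Caccioppoli inequality for powers of harmonic functions. -/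
lemma energy_cutoff_mul_rpow_le {x₀ : V} {n R₁ R₂ r : ℝ} (h : R₁ < R₂) (hR : R₂ ≤ n - 1)
    (hr : R₂ + 1 ≤ r) {u : V → ℝ} (hu : ∀ x, 0 < u x)
    (hharm : ∀ x ∈ X.ball x₀ n, lap X.nbr X.ω u x = 0) {α m : ℝ} (hm : 0 < m) (hm1 : m ≤ 1)
    (hα : α ≠ 0) (hαm : m ≤ |2 * α - 1|) :
    X.energy (X.ball x₀ n) (fun x => X.cutoff x₀ R₁ R₂ x * u x ^ α) ≤
      28 * (1 + α ^ 2) / m ^ 2 / (R₂ - R₁) ^ 2 *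
        ∑ x ∈ X.ball x₀ r, mu X.nbr X.ω x * u x ^ (2 * α) := by
  obtain ⟨ε, hε⟩ : ∃ ε : ℝ, (ε = 1 ∧ m ≤ 2 * α - 1) ∨ (ε = -1 ∧ 2 * α - 1 ≤ -m) := by
    rcases le_abs.1 hαm with h1 | h1
    · exact ⟨1, Or.inl ⟨rfl, h1⟩⟩
    · exact ⟨-1, Or.inr ⟨rfl, by linarith⟩⟩
  set B := X.ball x₀ n with hB
  set η := X.cutoff x₀ R₁ R₂ with hη
  have htest := X.sum_test_eq_zero x₀ n u (fun x => η x ^ 2 * u x ^ (2 * α - 1)) hharm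
    (fun x hx => by
      have : x ∉ X.ball x₀ R₂ := fun h' => hx (X.ball_mono x₀ hR h')
      simp [hη, X.cutoff_eq_zero h this])
  rw [← hB] at htest
  have hcut := X.sum_sq_cutoff_sub_mul_le (x₀ := x₀) h hr B (fun x => u x ^ (2 * α))
    (fun x => (Real.rpow_pos_of_pos (hu x) _).le)
  rw [← hη] at hcut
  set K₁ := 4 * (1 + α ^ 2) / m with hK₁
  set K₂ := 14 * (1 + α ^ 2) / m ^ 2 with hK₂
  have hK₂0 : 0 ≤ K₂ := by positivity
  have hsym : ∑ x ∈ B, ∑ y ∈ B, X.ω x y * ((η x - η y) ^ 2 * u y ^ (2 * α)) =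
      ∑ x ∈ B, ∑ y ∈ B, X.ω x y * ((η x - η y) ^ 2 * u x ^ (2 * α)) := by
    rw [Finset.sum_comm]
    refine Finset.sum_congr rfl fun x _ => Finset.sum_congr rfl fun y _ => ?_
    rw [X.symm]; ring
  calc X.energy B (fun x => η x * u x ^ α) ≤ ∑ x ∈ B, ∑ y ∈ B,
      ((K₁ * ε) * (X.ω x y * ((η x ^ 2 * u x ^ (2 * α - 1) - η y ^ 2 * u y ^ (2 * α - 1)) *
        (u x - u y))) + (K₂ * (X.ω x y * ((η x - η y) ^ 2 * u x ^ (2 * α))) +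
        K₂ * (X.ω x y * ((η x - η y) ^ 2 * u y ^ (2 * α))))) := by
        refine Finset.sum_le_sum fun x _ => Finset.sum_le_sum fun y _ => ?_
        have := mul_le_mul_of_nonneg_left (caccioppoli_pointwise (hu x) (hu y)
          (X.cutoff_nonneg x₀ R₁ R₂ x) (X.cutoff_nonneg x₀ R₁ R₂ y) hm hm1 hα hε)
          (X.nonneg_weight x y)
        refine this.trans (le_of_eq ?_)
        rw [← hη, ← hK₁, ← hK₂]
        ring
    _ = (K₁ * ε) * 0 + 2 * K₂ * ∑ x ∈ B, ∑ y ∈ B, X.ω x y * ((η x - η y) ^ 2 * u x ^ (2 * α)) := by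
        simp_rw [Finset.sum_add_distrib, ← Finset.mul_sum]
        rw [htest, hsym]
        ring
    _ ≤ (K₁ * ε) * 0 + 2 * K₂ * (1 / (R₂ - R₁) ^ 2 *
        ∑ x ∈ X.ball x₀ r, mu X.nbr X.ω x * u x ^ (2 * α)) := by gcongr
    _ = _ := by rw [hK₂]; ring

/-- Energy estimate for the logarithm of a harmonic function. -/
lemma energy_log_le {x₀ : V} {n : ℝ} (hn : 8 ≤ n) {u : V → ℝ} (hu : ∀ x, 0 < u x)
    (hharm : ∀ x ∈ X.ball x₀ n, lap X.nbr X.ω u x = 0) :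
    X.energy (X.ball x₀ (3 / 4 * n)) (fun x => Real.log (u x)) ≤
      384 / n ^ 2 * ∑ x ∈ X.ball x₀ n, mu X.nbr X.ω x := by
  have h : 3 / 4 * n < n - 1 := by linarith
  set B := X.ball x₀ n with hB
  set D := X.ball x₀ (3 / 4 * n) with hD
  have hDB : D ⊆ B := X.ball_mono x₀ (by linarith)
  set η := X.cutoff x₀ (3 / 4 * n) (n - 1) with hη
  have htest := X.sum_test_eq_zero x₀ n u (fun x => η x ^ 2 * (u x)⁻¹) hharm
    (fun x hx => by simp [hη, X.cutoff_eq_zero h hx])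
  rw [← hB] at htest
  have hcut := X.sum_sq_cutoff_sub_mul_le (x₀ := x₀) h (r := n) (by linarith) B (fun _ => 1)
    (fun _ => zero_le_one)
  simp only [mul_one] at hcut
  rw [← hη, ← hB] at hcut
  have hmu0 : 0 ≤ ∑ x ∈ B, mu X.nbr X.ω x := Finset.sum_nonneg fun x _ => X.mu_nonneg x
  have hterm : ∀ x y, 0 ≤ X.ω x y * (min (η x) (η y) ^ 2 *
      (Real.log (u x) - Real.log (u y)) ^ 2) :=
    fun x y => mul_nonneg (X.nonneg_weight x y) (by positivity)
  have h1 : X.energy D (fun x => Real.log (u x)) ≤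
      ∑ x ∈ B, ∑ y ∈ B, X.ω x y * (min (η x) (η y) ^ 2 *
        (Real.log (u x) - Real.log (u y)) ^ 2) := by
    calc _ = ∑ x ∈ D, ∑ y ∈ D, X.ω x y * (min (η x) (η y) ^ 2 *
        (Real.log (u x) - Real.log (u y)) ^ 2) := by
          refine Finset.sum_congr rfl fun x hx => Finset.sum_congr rfl fun y hy => ?_
          rw [hη, X.cutoff_eq_one h hx, X.cutoff_eq_one h hy]; simp
      _ ≤ ∑ x ∈ D, ∑ y ∈ B, X.ω x y * (min (η x) (η y) ^ 2 *
        (Real.log (u x) - Real.log (u y)) ^ 2) :=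
          Finset.sum_le_sum fun x _ => Finset.sum_le_sum_of_subset_of_nonneg hDB
            fun y _ _ => hterm x y
      _ ≤ _ := Finset.sum_le_sum_of_subset_of_nonneg hDB
          fun x _ _ => Finset.sum_nonneg fun y _ => hterm x y
  have h2 : ∑ x ∈ B, ∑ y ∈ B, X.ω x y * (min (η x) (η y) ^ 2 *
        (Real.log (u x) - Real.log (u y)) ^ 2) ≤
      6 * ∑ x ∈ B, ∑ y ∈ B, X.ω x y * (η x - η y) ^ 2 := by
    calc _ ≤ ∑ x ∈ B, ∑ y ∈ B, ((-2) * (X.ω x y * ((η x ^ 2 * (u x)⁻¹ - η y ^ 2 * (u y)⁻¹) *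
        (u x - u y))) + 6 * (X.ω x y * (η x - η y) ^ 2)) := by
          refine Finset.sum_le_sum fun x _ => Finset.sum_le_sum fun y _ => ?_
          have := mul_le_mul_of_nonneg_left (log_caccioppoli_pointwise (hu x) (hu y)
            (X.cutoff_nonneg x₀ (3 / 4 * n) (n - 1) x) (X.cutoff_nonneg x₀ (3 / 4 * n) (n - 1) y))
            (X.nonneg_weight x y)
          rw [← hη] at this
          linarith
      _ = (-2) * 0 + 6 * ∑ x ∈ B, ∑ y ∈ B, X.ω x y * (η x - η y) ^ 2 := by
          simp_rw [Finset.sum_add_distrib, ← Finset.mul_sum]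
          rw [htest]
      _ = _ := by ring
  have h3 : 1 / (n - 1 - 3 / 4 * n) ^ 2 ≤ 64 / n ^ 2 := by
    rw [div_le_div_iff₀ (by nlinarith) (by positivity)]
    nlinarith
  calc _ ≤ _ := h1
    _ ≤ _ := h2
    _ ≤ 6 * (1 / (n - 1 - 3 / 4 * n) ^ 2 * ∑ x ∈ B, mu X.nbr X.ω x) := by gcongr
    _ ≤ 6 * (64 / n ^ 2 * ∑ x ∈ B, mu X.nbr X.ω x) := by gcongr
    _ = _ := by ring

end ConductanceGraph

lemma nrm_nonneg {V : Type*} (B : Finset V) (p : ℝ) (f : V → ℝ) : 0 ≤ nrm B p f :=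
  Real.rpow_nonneg (mul_nonneg (by positivity)
    (Finset.sum_nonneg fun x _ => Real.rpow_nonneg (abs_nonneg _) _)) _

lemma sum_rpow_rpow_eq_card_rpow_mul_nrm {V : Type*} {B : Finset V} (hB : B.Nonempty) (p : ℝ)
    {f : V → ℝ} (hf : ∀ x, 0 ≤ f x) :
    (∑ x ∈ B, f x ^ p) ^ (1 / p) = (B.card : ℝ) ^ (1 / p) * nrm B p f := by
  have hb : (0 : ℝ) < B.card := by exact_mod_cast Finset.card_pos.2 hB
  have h0 : 0 ≤ ∑ x ∈ B, f x ^ p := Finset.sum_nonneg fun x _ => Real.rpow_nonneg (hf x) _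
  unfold nrm
  simp_rw [abs_of_nonneg (hf _)]
  rw [← Real.mul_rpow hb.le (by positivity), mul_inv_cancel_left₀ hb.ne']

lemma le_card_rpow_mul_nrm {V : Type*} {B : Finset V} {p : ℝ} (hp : 0 < p) {f : V → ℝ}
    (hf : ∀ x, 0 ≤ f x) {x : V} (hx : x ∈ B) : f x ≤ (B.card : ℝ) ^ (1 / p) * nrm B p f := by
  rw [← sum_rpow_rpow_eq_card_rpow_mul_nrm ⟨x, hx⟩ p hf]
  calc f x = (f x ^ p) ^ (1 / p) := by
        rw [← Real.rpow_mul (hf x), mul_one_div_cancel hp.ne', Real.rpow_one]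
    _ ≤ _ := Real.rpow_le_rpow (Real.rpow_nonneg (hf x) _)
        (Finset.single_le_sum (f := fun x => f x ^ p) (fun y _ => Real.rpow_nonneg (hf y) _) hx)
        (by positivity)

lemma one_div_div_sub_one {p : ℝ} (hp : 1 < p) : 1 / (p / (p - 1)) = 1 - 1 / p := by
  have : p - 1 ≠ 0 := by linarith
  field_simp

lemma sum_mul_le_rpow_mul_rpow {V : Type*} (D : Finset V) {p : ℝ} (hp : 1 < p) {f g : V → ℝ}
    (hf : ∀ x, 0 ≤ f x) (hg : ∀ x, 0 ≤ g x) :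
    ∑ x ∈ D, f x * g x ≤ (∑ x ∈ D, f x ^ p) ^ (1 / p) *
      (∑ x ∈ D, g x ^ (p / (p - 1))) ^ (1 - 1 / p) := by
  have hconj : p.HolderConjugate (p / (p - 1)) := by
    have := Real.HolderConjugate.conjExponent hp
    simpa [Real.conjExponent] using this
  have := Real.inner_le_Lp_mul_Lq_of_nonneg D hconj (f := f) (g := g)
    (fun x _ => hf x) (fun x _ => hg x)
  rwa [one_div_div_sub_one hp] at this

lemma sum_le_card_mul_nrm {V : Type*} {B : Finset V} (hB : B.Nonempty) {p : ℝ} (hp : 1 < p)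
    {f : V → ℝ} (hf : ∀ x, 0 ≤ f x) : ∑ x ∈ B, f x ≤ B.card * nrm B p f := by
  have hb : (0 : ℝ) < B.card := by exact_mod_cast Finset.card_pos.2 hB
  have h := sum_mul_le_rpow_mul_rpow B hp hf (g := fun _ => 1) (fun _ => zero_le_one)
  rw [sum_rpow_rpow_eq_card_rpow_mul_nrm hB p hf] at h
  simp only [mul_one, Real.one_rpow, Finset.sum_const, nsmul_eq_mul] at h
  refine h.trans (le_of_eq ?_)
  rw [mul_right_comm, ← Real.rpow_add hb]
  norm_num

namespace ConductanceGraph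

variable {V : Type} {d : ℕ} {Creg Criso : ℝ} (X : ConductanceGraph V d Creg Criso)

/-- The ellipticity contrast of the weights on a ball. -/
def contrast (p q : ℝ) (x₀ : V) (n : ℝ) : ℝ :=
  max 1 (nrm (X.ball x₀ n) p (mu X.nbr X.ω) * nrm (X.ball x₀ n) q (nu X.nbr X.ω))

lemma one_le_contrast (p q : ℝ) (x₀ : V) (n : ℝ) : 1 ≤ X.contrast p q x₀ n := le_max_left _ _

lemma nrm_mul_nrm_le_contrast (p q : ℝ) (x₀ : V) (n : ℝ) :
    nrm (X.ball x₀ n) p (mu X.nbr X.ω) * nrm (X.ball x₀ n) q (nu X.nbr X.ω) ≤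
      X.contrast p q x₀ n := le_max_right _ _

lemma center_mem_ball (x₀ : V) {n : ℝ} (hn : 0 ≤ n) : x₀ ∈ X.ball x₀ n := by
  rw [X.mem_ball]; simpa using hn

/-- The logarithm of a harmonic function has bounded mean oscillation. -/
lemma exists_log_oscillation_le (hCreg : 0 < Creg) (hCriso : 0 < Criso) {p q : ℝ} (hp : 1 < p)
    (hq : 1 < q) {x₀ : V} {n : ℝ} (hn : 8 ≤ n) {u : V → ℝ} (hu : ∀ x, 0 < u x)
    (hharm : ∀ x ∈ X.ball x₀ n, lap X.nbr X.ω u x = 0) :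
    ∃ c, ∀ ε : ℝ, ε = 1 ∨ ε = -1 →
      ∑ x ∈ X.ball x₀ (3 / 4 * n), max 0 (ε * (Real.log (u x) - c)) ≤
        (X.ball x₀ n).card * (15 * ((1 + Creg) / Criso + 1) * X.contrast p q x₀ n) := by
  obtain ⟨c, hc⟩ := X.poincare hCreg hCriso x₀ (3 / 4 * n) (by linarith) (fun x => Real.log (u x))
  refine ⟨c, fun ε hε => (hc ε hε).trans ?_⟩
  have hne : (X.ball x₀ n).Nonempty := ⟨x₀, X.center_mem_ball x₀ (by linarith)⟩
  have hM1 := X.one_le_contrast p q x₀ n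
  have hM2 := X.nrm_mul_nrm_le_contrast p q x₀ n
  set M := X.contrast p q x₀ n with hM
  set b : ℝ := ((X.ball x₀ n).card : ℝ) with hb
  have hb0 : 0 ≤ b := by positivity
  set D := X.ball x₀ (3 / 4 * n) with hD
  have hDB : D ⊆ X.ball x₀ n := X.ball_mono x₀ (by linarith)
  set J := ∑ x ∈ D, ∑ y ∈ D, adj X.G x y * |Real.log (u x) - Real.log (u y)| with hJ
  have h1 := X.sq_sum_adj_le D (fun _ => 1) (fun x => Real.log (u x))
  simp only [one_mul, one_pow, mul_one] at h1
  rw [← hJ] at h1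
  have h2 := X.energy_log_le hn hu hharm
  have h3 := sum_le_card_mul_nrm hne hp X.mu_nonneg
  have h4 : ∑ x ∈ D, nu X.nbr X.ω x ≤ b * nrm (X.ball x₀ n) q (nu X.nbr X.ω) :=
    (Finset.sum_le_sum_of_subset_of_nonneg hDB fun x _ _ => X.nu_nonneg x).trans
      (sum_le_card_mul_nrm hne hq X.nu_nonneg)
  have hν0 := nrm_nonneg (X.ball x₀ n) q (nu X.nbr X.ω)
  set Nμ := nrm (X.ball x₀ n) p (mu X.nbr X.ω)
  set Nν := nrm (X.ball x₀ n) q (nu X.nbr X.ω)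
  have h5 : J ^ 2 ≤ (20 / n * b * M) ^ 2 := by
    calc J ^ 2 ≤ _ := h1
      _ ≤ (b * Nν) * (384 / n ^ 2 * (b * Nμ)) :=
          mul_le_mul h4 (h2.trans (by gcongr)) (X.energy_nonneg _ _) (by positivity)
      _ = 384 / n ^ 2 * b ^ 2 * (Nμ * Nν) := by ring
      _ ≤ 400 / n ^ 2 * b ^ 2 * (M * M) := by
          have hMM : Nμ * Nν ≤ M * M := by nlinarith
          have hNN : 0 ≤ Nμ * Nν := mul_nonneg (nrm_nonneg _ _ _) hν0
          refine mul_le_mul ?_ hMM hNN (by positivity)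
          gcongr
          norm_num
      _ = _ := by ring
  have h6 : J ≤ 20 / n * b * M := le_of_sq_le_sq h5 (by positivity)
  calc _ ≤ ((1 + Creg) / Criso + 1) * (3 / 4 * n) * (20 / n * b * M) := by gcongr
    _ = _ := by field_simp; ring

set_option maxHeartbeats 1000000 in
/-- Gain of integrability for powers of harmonic functions between well separated balls. -/
lemma rpow_sum_rpow_le_of_le (hd : 2 ≤ d) (hCreg : 0 < Creg) (hCriso : 0 < Criso) {p q ρ : ℝ}
    (hp : 1 < p) (hq : 1 < q) (hρ : 0 < ρ) (hρq : 1 / ρ = 1 - 2 / (d : ℝ) + 1 / q) {m : ℝ}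
    (hm : 0 < m) (hm1 : m ≤ 1) {x₀ : V} {n : ℝ} (hn : 1 ≤ n) {u : V → ℝ}
    (hu : ∀ x, 0 < u x) (hharm : ∀ x ∈ X.ball x₀ n, lap X.nbr X.ω u x = 0) {α : ℝ} (hα : α ≠ 0)
    (hαm : m ≤ |2 * α - 1|) {σ' σ : ℝ} (hσ' : 1 / 2 ≤ σ') (hσ : σ ≤ 3 / 4)
    (hδn : 2 ≤ (σ - σ') * n) :
    (((X.ball x₀ n).card : ℝ)⁻¹ * ∑ x ∈ X.ball x₀ (σ' * n), u x ^ (2 * α * ρ)) ^ (1 / ρ) ≤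
      (4 * (Creg ^ 2 * (3 * Creg) ^ (1 / (d : ℝ)) / Criso) ^ 2 * (1 + ρ * (1 - 1 / q)) ^ 2 *
        (112 / m ^ 2) * Creg ^ (2 / (d : ℝ))) * X.contrast p q x₀ n * (1 + α ^ 2) *
        (σ - σ')⁻¹ ^ 2 * (((X.ball x₀ n).card : ℝ)⁻¹ *
          ∑ x ∈ X.ball x₀ (σ * n), u x ^ (2 * α * (p / (p - 1)))) ^ (1 - 1 / p) := by
  have hd' : (2 : ℝ) ≤ d := by exact_mod_cast hd
  have hδ : 0 < σ - σ' := by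
    by_contra h
    push Not at h
    nlinarith
  have hne : (X.ball x₀ n).Nonempty := ⟨x₀, X.center_mem_ball x₀ (by linarith)⟩
  have hM2 := X.nrm_mul_nrm_le_contrast p q x₀ n
  have hM1 := X.one_le_contrast p q x₀ n
  set M := X.contrast p q x₀ n with hM
  have hR : σ' * n < σ * n - 1 := by linarith
  have hRn : σ * n - 1 ≤ n - 1 := by nlinarith
  set B := X.ball x₀ n with hB
  set b : ℝ := (B.card : ℝ) with hb
  have hb0 : 0 < b := by rw [hb]; exact_mod_cast Finset.card_pos.2 hne
  set CW := 4 * (Creg ^ 2 * (3 * Creg) ^ (1 / (d : ℝ)) / Criso) ^ 2 *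
    (1 + ρ * (1 - 1 / q)) ^ 2 with hCW
  have hCW0 : 0 ≤ CW := by positivity
  set η := X.cutoff x₀ (σ' * n) (σ * n - 1) with hη
  have hS := X.weighted_sobolev hd hCreg hCriso hq hρ hρq x₀ n (fun x => η x * u x ^ α)
    (fun x => mul_nonneg (X.cutoff_nonneg _ _ _ x) (Real.rpow_nonneg (hu x).le _))
    (fun x hx => by
      have : x ∉ X.ball x₀ (σ * n - 1) := fun h' => hx (X.ball_mono x₀ hRn h')
      simp [hη, X.cutoff_eq_zero hR this])
  have hC := X.energy_cutoff_mul_rpow_le hR hRn (r := σ * n) (by linarith) hu hharm hm hm1 hα hαm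
  rw [← hB, ← hη] at hC
  rw [← hB, ← hCW, sum_rpow_rpow_eq_card_rpow_mul_nrm hne q X.nu_nonneg, ← hb] at hS
  have hH := sum_mul_le_rpow_mul_rpow (X.ball x₀ (σ * n)) hp X.mu_nonneg
    (g := fun x => u x ^ (2 * α)) (fun x => Real.rpow_nonneg (hu x).le _)
  have hμ : (∑ x ∈ X.ball x₀ (σ * n), mu X.nbr X.ω x ^ p) ^ (1 / p) ≤
      b ^ (1 / p) * nrm B p (mu X.nbr X.ω) := by
    rw [hb, ← sum_rpow_rpow_eq_card_rpow_mul_nrm hne p X.mu_nonneg]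
    refine Real.rpow_le_rpow (Finset.sum_nonneg fun x _ => Real.rpow_nonneg (X.mu_nonneg x) _)
      (Finset.sum_le_sum_of_subset_of_nonneg (X.ball_mono x₀ (by nlinarith))
        fun x _ _ => Real.rpow_nonneg (X.mu_nonneg x) _) (by positivity)
  set Nμ := nrm B p (mu X.nbr X.ω) with hNμ
  set Nν := nrm B q (nu X.nbr X.ω) with hNν
  have hNμ0 : 0 ≤ Nμ := nrm_nonneg _ _ _
  have hNν0 : 0 ≤ Nν := nrm_nonneg _ _ _
  set A' := b⁻¹ * ∑ x ∈ X.ball x₀ (σ' * n), u x ^ (2 * α * ρ) with hA'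
  set A := b⁻¹ * ∑ x ∈ X.ball x₀ (σ * n), u x ^ (2 * α * (p / (p - 1))) with hA
  have hA'0 : 0 ≤ A' := mul_nonneg (by positivity)
    (Finset.sum_nonneg fun x _ => Real.rpow_nonneg (hu x).le _)
  have hA0 : 0 ≤ A := mul_nonneg (by positivity)
    (Finset.sum_nonneg fun x _ => Real.rpow_nonneg (hu x).le _)
  have eA : ∑ x ∈ X.ball x₀ (σ * n), (u x ^ (2 * α)) ^ (p / (p - 1)) = b * A := by
    rw [hA, mul_inv_cancel_left₀ hb0.ne']
    exact Finset.sum_congr rfl fun x _ => by rw [← Real.rpow_mul (hu x).le]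
  rw [eA, Real.mul_rpow hb0.le hA0] at hH
  have hlow : b * A' ≤ ∑ x ∈ B, (η x * u x ^ α) ^ (2 * ρ) := by
    rw [hA', mul_inv_cancel_left₀ hb0.ne']
    calc ∑ x ∈ X.ball x₀ (σ' * n), u x ^ (2 * α * ρ) =
        ∑ x ∈ X.ball x₀ (σ' * n), (η x * u x ^ α) ^ (2 * ρ) := by
          refine Finset.sum_congr rfl fun x hx => ?_
          rw [hη, X.cutoff_eq_one hR hx, one_mul, ← Real.rpow_mul (hu x).le]
          congr 1; ring
      _ ≤ _ := Finset.sum_le_sum_of_subset_of_nonneg (X.ball_mono x₀ (by nlinarith))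
          fun x _ _ => Real.rpow_nonneg
            (mul_nonneg (X.cutoff_nonneg _ _ _ x) (Real.rpow_nonneg (hu x).le _)) _
  have hlow' := Real.rpow_le_rpow (by positivity) hlow (by positivity : 0 ≤ 1 / ρ)
  rw [Real.mul_rpow hb0.le hA'0] at hlow'
  have hgap : 28 * (1 + α ^ 2) / m ^ 2 / (σ * n - 1 - σ' * n) ^ 2 ≤
      112 / m ^ 2 * (1 + α ^ 2) * (σ - σ')⁻¹ ^ 2 / n ^ 2 := by
    have h1 : (σ - σ') * n / 2 ≤ σ * n - 1 - σ' * n := by linarith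
    have h2 : 0 < (σ - σ') * n / 2 := by linarith
    calc _ ≤ 28 * (1 + α ^ 2) / m ^ 2 / ((σ - σ') * n / 2) ^ 2 := by gcongr
      _ = _ := by field_simp; ring
  have hvol : b ^ (2 / (d : ℝ)) ≤ Creg ^ (2 / (d : ℝ)) * n ^ 2 := by
    calc b ^ (2 / (d : ℝ)) ≤ (Creg * n ^ d) ^ (2 / (d : ℝ)) :=
          Real.rpow_le_rpow hb0.le (X.volume x₀ n hn).2 (by positivity)
      _ = _ := by
          rw [Real.mul_rpow hCreg.le (by positivity), ← Real.rpow_natCast n d,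
            ← Real.rpow_mul (by linarith), ← Real.rpow_natCast n 2]
          congr 2
          push_cast
          field_simp
  have hexp : b ^ (1 / q) * b ^ (1 / p) * b ^ (1 - 1 / p) = b ^ (1 / ρ) * b ^ (2 / (d : ℝ)) := by
    rw [← Real.rpow_add hb0, ← Real.rpow_add hb0, ← Real.rpow_add hb0, hρq]
    congr 1; ring
  have hbρ : 0 < b ^ (1 / ρ) := Real.rpow_pos_of_pos hb0 _
  have hAp : 0 ≤ A ^ (1 - 1 / p) := Real.rpow_nonneg hA0 _
  refine le_of_mul_le_mul_left ?_ hbρ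
  calc b ^ (1 / ρ) * A' ^ (1 / ρ) ≤ _ := hlow'
    _ ≤ _ := hS
    _ ≤ CW * (b ^ (1 / q) * Nν) * (112 / m ^ 2 * (1 + α ^ 2) * (σ - σ')⁻¹ ^ 2 / n ^ 2 *
        (b ^ (1 / p) * Nμ * (b ^ (1 - 1 / p) * A ^ (1 - 1 / p)))) := by
        refine mul_le_mul_of_nonneg_left ?_ (by positivity)
        refine hC.trans ?_
        refine mul_le_mul hgap (hH.trans ?_) (Finset.sum_nonneg fun x _ =>
          mul_nonneg (X.mu_nonneg x) (Real.rpow_nonneg (hu x).le _)) (by positivity)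
        gcongr
    _ = CW * (112 / m ^ 2 * (1 + α ^ 2) * (σ - σ')⁻¹ ^ 2 / n ^ 2) * (Nμ * Nν) *
        A ^ (1 - 1 / p) * (b ^ (1 / q) * b ^ (1 / p) * b ^ (1 - 1 / p)) := by ring
    _ ≤ CW * (112 / m ^ 2 * (1 + α ^ 2) * (σ - σ')⁻¹ ^ 2 / n ^ 2) * M *
        A ^ (1 - 1 / p) * (b ^ (1 / ρ) * (Creg ^ (2 / (d : ℝ)) * n ^ 2)) := by
        rw [hexp]
        gcongr
    _ = _ := by field_simp

/-- Gain of integrability between balls of nearby radii, from the embedding of sequence spaces. -/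
lemma sum_rpow_le_of_lt (hCreg : 0 < Creg) {p ρ : ℝ}
    (hp : 1 < p) (hχ : 1 ≤ ρ * (1 - 1 / p)) {x₀ : V} {n : ℝ} (hn : 1 ≤ n) {u : V → ℝ}
    (hu : ∀ x, 0 < u x) {α σ' σ : ℝ} (hσ : σ' < σ) (hδn : (σ - σ') * n < 2) :
    ((X.ball x₀ n).card : ℝ)⁻¹ * ∑ x ∈ X.ball x₀ (σ' * n), u x ^ (2 * α * ρ) ≤
      (Creg * 2 ^ d * (σ - σ')⁻¹ ^ d) ^ (ρ * (1 - 1 / p) - 1) * (((X.ball x₀ n).card : ℝ)⁻¹ *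
          ∑ x ∈ X.ball x₀ (σ * n), u x ^ (2 * α * (p / (p - 1)))) ^ (ρ * (1 - 1 / p)) := by
  have hne : (X.ball x₀ n).Nonempty := ⟨x₀, X.center_mem_ball x₀ (by linarith)⟩
  set χ := ρ * (1 - 1 / p) with hχdef
  set b : ℝ := ((X.ball x₀ n).card : ℝ) with hb
  have hb0 : 0 < b := by rw [hb]; exact_mod_cast Finset.card_pos.2 hne
  set S := ∑ x ∈ X.ball x₀ (σ * n), u x ^ (2 * α * (p / (p - 1))) with hS
  have hS0 : 0 ≤ S := Finset.sum_nonneg fun x _ => Real.rpow_nonneg (hu x).le _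
  have h1 : ∑ x ∈ X.ball x₀ (σ' * n), u x ^ (2 * α * ρ) ≤ S ^ χ := by
    calc _ ≤ ∑ x ∈ X.ball x₀ (σ * n), u x ^ (2 * α * ρ) :=
          Finset.sum_le_sum_of_subset_of_nonneg (X.ball_mono x₀ (by nlinarith))
            fun x _ _ => Real.rpow_nonneg (hu x).le _
      _ = ∑ x ∈ X.ball x₀ (σ * n), (u x ^ (2 * α * (p / (p - 1)))) ^ χ := by
          refine Finset.sum_congr rfl fun x _ => ?_
          rw [← Real.rpow_mul (hu x).le]
          congr 1
          rw [hχdef]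
          have : p - 1 ≠ 0 := by linarith
          field_simp
      _ ≤ S ^ χ := by
          have key : ∀ A : Finset V, ∑ x ∈ A, (u x ^ (2 * α * (p / (p - 1)))) ^ χ ≤
              (∑ x ∈ A, u x ^ (2 * α * (p / (p - 1)))) ^ χ := by
            classical
            intro A
            induction A using Finset.induction_on with
            | empty => simp [Real.zero_rpow (by linarith : χ ≠ 0)]
            | insert a A ha ih =>
              rw [Finset.sum_insert ha, Finset.sum_insert ha]
              exact (add_le_add le_rfl ih).trans (Real.add_rpow_le_rpow_add
                (Real.rpow_nonneg (hu a).le _)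
                (Finset.sum_nonneg fun x _ => Real.rpow_nonneg (hu x).le _) hχ)
          exact key _
  have hδ : 0 < σ - σ' := by linarith
  have hvol : b ≤ Creg * 2 ^ d * (σ - σ')⁻¹ ^ d := by
    have h2 : n ≤ 2 * (σ - σ')⁻¹ := by
      rw [← div_eq_mul_inv, le_div_iff₀ hδ]; linarith
    calc b ≤ Creg * n ^ d := (X.volume x₀ n hn).2
      _ ≤ Creg * (2 * (σ - σ')⁻¹) ^ d := by gcongr
      _ = _ := by rw [mul_pow]; ring
  calc _ ≤ b⁻¹ * S ^ χ := by gcongr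
    _ = b ^ (χ - 1) * (b⁻¹ * S) ^ χ := by
        rw [Real.mul_rpow (by positivity) hS0, Real.rpow_sub hb0, Real.rpow_one,
          Real.inv_rpow hb0.le]
        have : 0 < b ^ χ := Real.rpow_pos_of_pos hb0 _
        field_simp
    _ ≤ _ := by
        gcongr

end ConductanceGraph

/-- Gain of integrability for powers of harmonic functions. -/
lemma exists_rpow_step {d : ℕ} (hd : 2 ≤ d) {Creg Criso : ℝ} (hCreg : 0 < Creg)
    (hCriso : 0 < Criso) {p q ρ : ℝ} (hp : 1 < p) (hq : 1 < q) (hρ : 0 < ρ)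
    (hρq : 1 / ρ = 1 - 2 / (d : ℝ) + 1 / q) (hχ : 1 ≤ ρ * (1 - 1 / p)) {m : ℝ}
    (hm : 0 < m) (hm1 : m ≤ 1) :
    ∃ K : ℝ, 1 ≤ K ∧ ∀ (V : Type) (X : ConductanceGraph V d Creg Criso) (x₀ : V) (n : ℝ), 1 ≤ n →
      ∀ u : V → ℝ, (∀ x, 0 < u x) → (∀ x ∈ X.ball x₀ n, lap X.nbr X.ω u x = 0) →
      ∀ α : ℝ, α ≠ 0 → m ≤ |2 * α - 1| → ∀ σ' σ : ℝ, 1 / 2 ≤ σ' → σ' < σ → σ ≤ 3 / 4 →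
      ((X.ball x₀ n).card : ℝ)⁻¹ * ∑ x ∈ X.ball x₀ (σ' * n), u x ^ (2 * α * ρ) ≤
        (K * X.contrast p q x₀ n * (1 + α ^ 2) * (σ - σ')⁻¹ ^ (d + 2)) ^ ρ *
        (((X.ball x₀ n).card : ℝ)⁻¹ *
          ∑ x ∈ X.ball x₀ (σ * n), u x ^ (2 * α * (p / (p - 1)))) ^ (ρ * (1 - 1 / p)) := by
  set K₁ := 4 * (Creg ^ 2 * (3 * Creg) ^ (1 / (d : ℝ)) / Criso) ^ 2 *
    (1 + ρ * (1 - 1 / q)) ^ 2 * (112 / m ^ 2) * Creg ^ (2 / (d : ℝ)) with hK₁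
  have hK₁0 : 0 ≤ K₁ := by positivity
  refine ⟨1 + K₁ + Creg * 2 ^ d, by
    have : 0 ≤ Creg * 2 ^ d := by positivity
    linarith, ?_⟩
  intro V X x₀ n hn u hu hharm α hα hαm σ' σ hσ' hσσ' hσ
  set K := 1 + K₁ + Creg * 2 ^ d with hK
  have hδ : 0 < σ - σ' := by linarith
  have hδ1 : 1 ≤ (σ - σ')⁻¹ := (one_le_inv₀ hδ).2 (by linarith)
  have hM1 := X.one_le_contrast p q x₀ n
  set M := X.contrast p q x₀ n with hM
  set b : ℝ := ((X.ball x₀ n).card : ℝ) with hb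
  have hb0 : 0 ≤ b := by positivity
  set A' := b⁻¹ * ∑ x ∈ X.ball x₀ (σ' * n), u x ^ (2 * α * ρ) with hA'
  set A := b⁻¹ * ∑ x ∈ X.ball x₀ (σ * n), u x ^ (2 * α * (p / (p - 1))) with hA
  have hA'0 : 0 ≤ A' := mul_nonneg (by positivity)
    (Finset.sum_nonneg fun x _ => Real.rpow_nonneg (hu x).le _)
  have hA0 : 0 ≤ A := mul_nonneg (by positivity)
    (Finset.sum_nonneg fun x _ => Real.rpow_nonneg (hu x).le _)
  have hAp : 0 ≤ A ^ (1 - 1 / p) := Real.rpow_nonneg hA0 _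
  have hC2 : 0 < Creg * 2 ^ d := by positivity
  have hα2 : 0 ≤ α ^ 2 := sq_nonneg _
  have hpos : 0 ≤ K * M * (1 + α ^ 2) * (σ - σ')⁻¹ ^ (d + 2) := by positivity
  rcases le_or_gt 2 ((σ - σ') * n) with hcase | hcase
  · have h1 := X.rpow_sum_rpow_le_of_le hd hCreg hCriso hp hq hρ hρq hm hm1 hn hu hharm hα hαm
      hσ' hσ hcase
    rw [← hK₁, ← hM, ← hb, ← hA', ← hA] at h1
    have h2 : A' ^ (1 / ρ) ≤ K * M * (1 + α ^ 2) * (σ - σ')⁻¹ ^ (d + 2) * A ^ (1 - 1 / p) := by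
      refine h1.trans ?_
      gcongr
      · linarith
      · omega
    have h3 := Real.rpow_le_rpow (Real.rpow_nonneg hA'0 _) h2 hρ.le
    rw [← Real.rpow_mul hA'0, one_div_mul_cancel hρ.ne', Real.rpow_one,
      Real.mul_rpow hpos hAp, ← Real.rpow_mul hA0, mul_comm (1 - 1 / p) ρ] at h3
    exact h3
  · refine (X.sum_rpow_le_of_lt hCreg hp hχ hn hu hσσ' hcase).trans ?_
    rw [← hb, ← hA]
    refine mul_le_mul_of_nonneg_right ?_ (Real.rpow_nonneg hA0 _)
    have hp1 : 0 < 1 / p := by positivity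
    have h4 : Creg * 2 ^ d * (σ - σ')⁻¹ ^ d ≤ K * M * (1 + α ^ 2) * (σ - σ')⁻¹ ^ (d + 2) := by
      calc Creg * 2 ^ d * (σ - σ')⁻¹ ^ d = Creg * 2 ^ d * 1 * 1 * (σ - σ')⁻¹ ^ d := by ring
        _ ≤ _ := by
          gcongr
          · linarith
          · linarith
          · omega
    have h5 : 1 ≤ K * M * (1 + α ^ 2) * (σ - σ')⁻¹ ^ (d + 2) := by
      have e1 : 1 ≤ K := by linarith
      have e2 : 1 ≤ K * M := one_le_mul_of_one_le_of_one_le e1 hM1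
      have e3 : 1 ≤ K * M * (1 + α ^ 2) := one_le_mul_of_one_le_of_one_le e2 (by linarith)
      exact one_le_mul_of_one_le_of_one_le e3 (one_le_pow₀ hδ1)
    calc _ ≤ (K * M * (1 + α ^ 2) * (σ - σ')⁻¹ ^ (d + 2)) ^ (ρ * (1 - 1 / p) - 1) :=
          Real.rpow_le_rpow (by positivity) h4 (by linarith)
      _ ≤ _ := Real.rpow_le_rpow_of_exponent_le h5 (by nlinarith)

/-- Moser iteration: gains of integrability along a geometric sequence of exponents yield
pointwise bounds. -/
lemma moser_iteration {V : Type*} (D : ℝ → Finset V) (g : V → ℝ) (hg : ∀ x, 0 < g x) {b : ℝ}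
    (hb : 1 ≤ b) (S : Set ℝ) {χ ρ A : ℝ} (hχ : 1 < χ) (hρ : 0 < ρ) (hA : 1 ≤ A) (k : ℕ)
    (hSpos : ∀ s ∈ S, 0 < s) (hSmul : ∀ s ∈ S, s * χ ∈ S)
    (hD : ∀ ⦃σ' σ : ℝ⦄, σ' ≤ σ → D σ' ⊆ D σ)
    (hstep : ∀ s ∈ S, ∀ σ' σ : ℝ, 1 / 2 ≤ σ' → σ' < σ → σ ≤ 3 / 4 →
      b⁻¹ * ∑ x ∈ D σ', g x ^ (s * χ) ≤ (A * (1 + s ^ 2) * (σ - σ')⁻¹ ^ k) ^ ρ *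
        (b⁻¹ * ∑ x ∈ D σ, g x ^ s) ^ χ)
    {s : ℝ} (hs : s ∈ S) (hs1 : s ≤ 1) {σ' σ : ℝ} (hσ' : 1 / 2 ≤ σ') (hσσ' : σ' < σ)
    (hσ : σ ≤ 3 / 4) {x : V} (hx : x ∈ D σ') :
    s * Real.log (g x) ≤ Real.log (b⁻¹ * ∑ x ∈ D σ, g x ^ s) +
      ρ * ((χ - 1)⁻¹ * Real.log (2 ^ (k + 1) * A * (σ - σ')⁻¹ ^ k) +
        (χ - 1)⁻¹ ^ 2 * Real.log (χ ^ 2 * 2 ^ k)) := by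
  have hδ : 0 < σ - σ' := by linarith
  have hδ1 : 1 ≤ (σ - σ')⁻¹ := (one_le_inv₀ hδ).2 (by linarith)
  have hb0 : 0 < b := by linarith
  have hs0 : 0 < s := hSpos s hs
  set δ := σ - σ' with hδdef
  set Λ := 2 ^ (k + 1) * A * δ⁻¹ ^ k with hΛ
  set R := χ ^ 2 * 2 ^ k with hR
  set c := (χ - 1)⁻¹ with hc
  have hc0 : 0 < c := inv_pos.2 (by linarith)
  have hcχ : χ * c = 1 + c := by
    have : (χ - 1) * c = 1 := mul_inv_cancel₀ (by linarith)
    linarith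
  have hΛ1 : 1 ≤ Λ := by
    have h1 : (1 : ℝ) ≤ 2 ^ (k + 1) := one_le_pow₀ (by norm_num)
    have h2 : (1 : ℝ) ≤ δ⁻¹ ^ k := one_le_pow₀ hδ1
    exact one_le_mul_of_one_le_of_one_le (one_le_mul_of_one_le_of_one_le h1 hA) h2
  have hR1 : 1 ≤ R := by
    have h1 : (1 : ℝ) ≤ 2 ^ k := one_le_pow₀ (by norm_num)
    have h2 : (1 : ℝ) ≤ χ ^ 2 := one_le_pow₀ hχ.le
    exact one_le_mul_of_one_le_of_one_le h2 h1
  set lΛ := Real.log Λ with hlΛ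
  set lR := Real.log R with hlR
  have hlΛ0 : 0 ≤ lΛ := Real.log_nonneg hΛ1
  have hlR0 : 0 ≤ lR := Real.log_nonneg hR1
  set σs : ℕ → ℝ := fun j => σ' + δ * (1 / 2) ^ j with hσs
  set N : ℕ → ℝ := fun j => b⁻¹ * ∑ y ∈ D (σs j), g y ^ (s * χ ^ j) with hN
  have hσs_ge : ∀ j, σ' < σs j := fun j => by
    simp only [hσs]; have : 0 < δ * (1 / 2) ^ j := by positivity
    linarith
  have hσs_le : ∀ j, σs j ≤ σ := fun j => by
    simp only [hσs]
    have : ((1 : ℝ) / 2) ^ j ≤ 1 := pow_le_one₀ (by norm_num) (by norm_num)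
    nlinarith
  have hxD : ∀ j, x ∈ D (σs j) := fun j => hD (hσs_ge j).le hx
  have hgN : ∀ j, g x ^ (s * χ ^ j) ≤ b * N j := by
    intro j
    simp only [hN]
    rw [mul_inv_cancel_left₀ hb0.ne']
    exact Finset.single_le_sum (f := fun y => g y ^ (s * χ ^ j))
      (fun y _ => Real.rpow_nonneg (hg y).le _) (hxD j)
  have hNpos : ∀ j, 0 < N j := by
    intro j
    have := (Real.rpow_pos_of_pos (hg x) (s * χ ^ j)).trans_le (hgN j)
    exact pos_of_mul_pos_right this hb0.le
  have hSj : ∀ j : ℕ, s * χ ^ j ∈ S := by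
    intro j
    induction j with
    | zero => simpa using hs
    | succ j ih => rw [pow_succ, ← mul_assoc]; exact hSmul _ ih
  have hrec : ∀ j : ℕ, Real.log (N (j + 1)) ≤ ρ * (lΛ + j * lR) + χ * Real.log (N j) := by
    intro j
    have hlt : σs (j + 1) < σs j := by
      simp only [hσs]
      have : 0 < δ * (1 / 2) ^ j := by positivity
      rw [pow_succ]; linarith
    have h1 := hstep _ (hSj j) (σs (j + 1)) (σs j) (hσ'.trans (hσs_ge _).le) hlt
      ((hσs_le _).trans hσ)
    have e1 : s * χ ^ j * χ = s * χ ^ (j + 1) := by rw [pow_succ]; ring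
    rw [e1] at h1
    have hgap : (σs j - σs (j + 1))⁻¹ = δ⁻¹ * 2 ^ (j + 1) := by
      have e : σs j - σs (j + 1) = δ * (2 ^ (j + 1))⁻¹ := by
        simp only [hσs, one_div, inv_pow, pow_succ, mul_inv]; ring
      rw [e, mul_inv, inv_inv]
    have hΘ : A * (1 + (s * χ ^ j) ^ 2) * (σs j - σs (j + 1))⁻¹ ^ k ≤ Λ * R ^ j := by
      have h2 : 1 + (s * χ ^ j) ^ 2 ≤ 2 * (χ ^ 2) ^ j := by
        have h3 : (1 : ℝ) ≤ (χ ^ 2) ^ j := one_le_pow₀ (one_le_pow₀ hχ.le)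
        have h4 : (s * χ ^ j) ^ 2 = s ^ 2 * (χ ^ 2) ^ j := by rw [mul_pow, ← pow_mul, ← pow_mul,
          mul_comm j 2]
        have h5 : s ^ 2 ≤ 1 := pow_le_one₀ hs0.le hs1
        rw [h4]; nlinarith
      rw [hgap]
      calc _ ≤ A * (2 * (χ ^ 2) ^ j) * (δ⁻¹ * 2 ^ (j + 1)) ^ k := by gcongr
        _ = _ := by
          rw [hΛ, hR, mul_pow, mul_pow, ← pow_mul, ← pow_mul, ← pow_mul]
          rw [show (j + 1) * k = k * j + k by ring, pow_add, pow_succ 2 k]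
          ring
    have hΘ0 : 0 < A * (1 + (s * χ ^ j) ^ 2) * (σs j - σs (j + 1))⁻¹ ^ k := by
      rw [hgap]; positivity
    have h3 : N (j + 1) ≤ (Λ * R ^ j) ^ ρ * N j ^ χ := h1.trans
      (mul_le_mul_of_nonneg_right (Real.rpow_le_rpow hΘ0.le hΘ hρ.le)
        (Real.rpow_nonneg (hNpos j).le _))
    have h4 := Real.log_le_log (hNpos (j + 1)) h3
    have hΛR : 0 < Λ * R ^ j := by positivity
    have e : Real.log ((Λ * R ^ j) ^ ρ * N j ^ χ) = ρ * (lΛ + j * lR) + χ * Real.log (N j) := by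
      rw [Real.log_mul (Real.rpow_pos_of_pos hΛR _).ne' (Real.rpow_pos_of_pos (hNpos j) _).ne',
        Real.log_rpow hΛR, Real.log_rpow (hNpos j),
        Real.log_mul (by linarith) (pow_pos (by linarith) j).ne', Real.log_pow]
    rwa [e] at h4
  have hind : ∀ j : ℕ, Real.log (N j) + ρ * (c * lΛ + (c * j + c ^ 2) * lR) ≤
      χ ^ j * (Real.log (N 0) + ρ * (c * lΛ + c ^ 2 * lR)) := by
    intro j
    induction j with
    | zero => simp
    | succ j ih =>
      have h1 := hrec j
      have h2 := mul_le_mul_of_nonneg_left ih (by linarith : 0 ≤ χ)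
      have e1 : χ * (Real.log (N j) + ρ * (c * lΛ + (c * j + c ^ 2) * lR)) =
          χ * Real.log (N j) + ρ * ((χ * c) * lΛ + (χ * c) * (j + c) * lR) := by ring
      rw [e1, hcχ] at h2
      rw [pow_succ]
      push_cast
      calc _ ≤ ρ * (lΛ + j * lR) + χ * Real.log (N j) +
            ρ * (c * lΛ + (c * (j + 1) + c ^ 2) * lR) := by linarith
        _ = χ * Real.log (N j) + ρ * ((1 + c) * lΛ + (1 + c) * (j + c) * lR) := by ring
        _ ≤ _ := h2
        _ = _ := by ring
  have e0 : N 0 = b⁻¹ * ∑ y ∈ D σ, g y ^ s := by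
    simp only [hN, hσs]
    simp [hδdef]
  rw [← e0]
  set Q := Real.log (N 0) + ρ * (c * lΛ + c ^ 2 * lR) with hQ
  have hbound : ∀ j : ℕ, s * Real.log (g x) ≤ (1 / χ) ^ j * Real.log b + Q := by
    intro j
    have h1 := Real.log_le_log (Real.rpow_pos_of_pos (hg x) _) (hgN j)
    rw [Real.log_rpow (hg x), Real.log_mul hb0.ne' (hNpos j).ne'] at h1
    have h2 := hind j
    have h3 : 0 ≤ ρ * (c * lΛ + (c * j + c ^ 2) * lR) := by positivity
    have hχj : 0 < χ ^ j := by positivity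
    have h4 : χ ^ j * (s * Real.log (g x)) ≤ χ ^ j * ((1 / χ) ^ j * Real.log b + Q) := by
      have e : χ ^ j * ((1 / χ) ^ j * Real.log b + Q) = Real.log b + χ ^ j * Q := by
        rw [one_div_pow]; field_simp
      rw [e]; linarith
    exact le_of_mul_le_mul_left h4 hχj
  have hlim : Filter.Tendsto (fun j : ℕ => (1 / χ) ^ j * Real.log b + Q) Filter.atTop
      (nhds (0 * Real.log b + Q)) :=
    ((tendsto_pow_atTop_nhds_zero_of_lt_one (by positivity)
      ((div_lt_one (by linarith)).2 hχ)).mul_const _).add_const _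
  rw [zero_mul, zero_add] at hlim
  exact ge_of_tendsto' hlim hbound

/-- Bound of exponential moments of a function with small positive part. -/
lemma average_exp_le {V : Type*} {D D₀ : Finset V} (hD : D ⊆ D₀) {b T Ψ s : ℝ}
    (hb : (D₀.card : ℝ) ≤ b) (hb0 : 0 < b) (hT : 0 < T) (hΨ : 0 < Ψ) (hs : 0 < s) (ℓ : V → ℝ)
    (hℓ : ∑ x ∈ D₀, max 0 (ℓ x) ≤ b * T) (hΨℓ : ∀ x ∈ D, ℓ x ≤ Ψ)
    (hsΨ : s * Ψ / 2 ≤ Real.log (Ψ / (2 * T))) :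
    b⁻¹ * ∑ x ∈ D, Real.exp (s * ℓ x) ≤ 2 * Real.exp (s * Ψ / 2) := by
  have hpoint : ∀ x ∈ D, Real.exp (s * ℓ x) ≤
      Real.exp (s * Ψ / 2) + 2 / Ψ * Real.exp (s * Ψ) * max 0 (ℓ x) := by
    intro x hx
    rcases le_or_gt (ℓ x) (Ψ / 2) with h | h
    · have h1 : Real.exp (s * ℓ x) ≤ Real.exp (s * Ψ / 2) := Real.exp_le_exp.2 (by nlinarith)
      have h2 : 0 ≤ 2 / Ψ * Real.exp (s * Ψ) * max 0 (ℓ x) := by positivity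
      linarith
    · have h1 : Real.exp (s * ℓ x) ≤ Real.exp (s * Ψ) :=
        Real.exp_le_exp.2 (mul_le_mul_of_nonneg_left (hΨℓ x hx) hs.le)
      have h2 : Real.exp (s * Ψ) ≤ 2 / Ψ * Real.exp (s * Ψ) * max 0 (ℓ x) := by
        have h3 : Ψ / 2 ≤ max 0 (ℓ x) := h.le.trans (le_max_right _ _)
        calc Real.exp (s * Ψ) = 2 / Ψ * Real.exp (s * Ψ) * (Ψ / 2) := by field_simp
          _ ≤ _ := by gcongr
      have h3 := Real.exp_pos (s * Ψ / 2)
      linarith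
  have hexp : Real.exp (s * Ψ) = Real.exp (s * Ψ / 2) * Real.exp (s * Ψ / 2) := by
    rw [← Real.exp_add]; ring_nf
  have hexp2 : Real.exp (s * Ψ / 2) ≤ Ψ / (2 * T) := by
    rwa [← Real.le_log_iff_exp_le (by positivity)]
  have hcard : (D.card : ℝ) ≤ b := le_trans (by exact_mod_cast Finset.card_le_card hD) hb
  have hsum : ∑ x ∈ D, max 0 (ℓ x) ≤ b * T :=
    (Finset.sum_le_sum_of_subset_of_nonneg hD fun x _ _ => le_max_left _ _).trans hℓ
  have hE := Real.exp_pos (s * Ψ / 2)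
  calc b⁻¹ * ∑ x ∈ D, Real.exp (s * ℓ x) ≤
      b⁻¹ * ∑ x ∈ D, (Real.exp (s * Ψ / 2) + 2 / Ψ * Real.exp (s * Ψ) * max 0 (ℓ x)) := by
        gcongr with x hx
        exact hpoint x hx
    _ = b⁻¹ * (D.card * Real.exp (s * Ψ / 2) +
        2 / Ψ * Real.exp (s * Ψ) * ∑ x ∈ D, max 0 (ℓ x)) := by
        rw [Finset.sum_add_distrib, ← Finset.mul_sum, Finset.sum_const, nsmul_eq_mul]
    _ ≤ b⁻¹ * (b * Real.exp (s * Ψ / 2) + 2 / Ψ * Real.exp (s * Ψ) * (b * T)) := by gcongr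
    _ = Real.exp (s * Ψ / 2) + Real.exp (s * Ψ / 2) * (2 * T / Ψ * Real.exp (s * Ψ / 2)) := by
        rw [hexp]; field_simp
    _ ≤ Real.exp (s * Ψ / 2) + Real.exp (s * Ψ / 2) * (2 * T / Ψ * (Ψ / (2 * T))) := by gcongr
    _ = _ := by field_simp; norm_num

/-- Improvement of an upper bound on a smaller domain, in the spirit of Bombieri and Giusti. -/
lemma improve_upper_bound {V : Type*} (D : ℝ → Finset V) (g : V → ℝ) (hg : ∀ x, 0 < g x) {b : ℝ}
    (hb : 1 ≤ b) (S : Set ℝ) {χ ρ A T : ℝ} (hχ : 1 < χ) (hρ : 0 < ρ) (hA : 1 ≤ A) (hT : 1 ≤ T)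
    (k : ℕ) (hSpos : ∀ s ∈ S, 0 < s) (hSmul : ∀ s ∈ S, s * χ ∈ S)
    (hSex : ∀ s : ℝ, 0 < s → ∃ s' ∈ S, s / χ ≤ s' ∧ s' ≤ s)
    (hD : ∀ ⦃σ' σ : ℝ⦄, σ' ≤ σ → D σ' ⊆ D σ) (hDb : ((D (3 / 4)).card : ℝ) ≤ b)
    (hstep : ∀ s ∈ S, ∀ σ' σ : ℝ, 1 / 2 ≤ σ' → σ' < σ → σ ≤ 3 / 4 →
      b⁻¹ * ∑ x ∈ D σ', g x ^ (s * χ) ≤ (A * (1 + s ^ 2) * (σ - σ')⁻¹ ^ k) ^ ρ *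
        (b⁻¹ * ∑ x ∈ D σ, g x ^ s) ^ χ)
    (hosc : ∑ x ∈ D (3 / 4), max 0 (Real.log (g x)) ≤ b * T)
    {σ' σ Ψ : ℝ} (hσ' : 1 / 2 ≤ σ') (hσσ' : σ' < σ) (hσ : σ ≤ 3 / 4)
    (hΨ : 2 * Real.exp (2 * χ * (Real.log 2 + ρ * ((χ - 1)⁻¹ * ((k + 1) * Real.log 2) +
      (χ - 1)⁻¹ ^ 2 * Real.log (χ ^ 2 * 2 ^ k)))) * T * A ^ (2 * χ * ρ * (χ - 1)⁻¹) *
      (σ - σ')⁻¹ ^ (2 * χ * ρ * (χ - 1)⁻¹ * k) ≤ Ψ)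
    (hle : ∀ x ∈ D σ, Real.log (g x) ≤ Ψ) {x : V} (hx : x ∈ D σ') :
    Real.log (g x) ≤ 3 / 4 * Ψ := by
  have hδ : 0 < σ - σ' := by linarith
  have hδ1 : 1 ≤ (σ - σ')⁻¹ := (one_le_inv₀ hδ).2 (by linarith)
  have hb0 : 0 < b := by linarith
  have hT0 : 0 < T := by linarith
  have hA0 : 0 < A := by linarith
  have hδ0 : 0 < (σ - σ')⁻¹ := by linarith
  set c := (χ - 1)⁻¹ with hc
  have hc0 : 0 < c := inv_pos.2 (by linarith)
  set L := ρ * (c * Real.log (2 ^ (k + 1) * A * (σ - σ')⁻¹ ^ k) +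
        c ^ 2 * Real.log (χ ^ 2 * 2 ^ k)) with hL
  have hL0 : 0 ≤ L := by
    have h1 : (1 : ℝ) ≤ 2 ^ (k + 1) * A * (σ - σ')⁻¹ ^ k :=
      one_le_mul_of_one_le_of_one_le (one_le_mul_of_one_le_of_one_le
        (one_le_pow₀ (by norm_num)) hA) (one_le_pow₀ hδ1)
    have h2 : (1 : ℝ) ≤ χ ^ 2 * 2 ^ k :=
      one_le_mul_of_one_le_of_one_le (one_le_pow₀ hχ.le) (one_le_pow₀ (by norm_num))
    have h3 := Real.log_nonneg h1
    have h4 := Real.log_nonneg h2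
    positivity
  have hlogL : Real.log (2 ^ (k + 1) * A * (σ - σ')⁻¹ ^ k) =
      (k + 1) * Real.log 2 + Real.log A + k * Real.log (σ - σ')⁻¹ := by
    rw [Real.log_mul (by positivity) (by positivity), Real.log_mul (by positivity) (by positivity),
      Real.log_pow, Real.log_pow]
    push_cast; ring
  have hthr : 2 * T * Real.exp (2 * χ * (Real.log 2 + L)) ≤ Ψ := by
    refine le_trans (le_of_eq ?_) hΨ
    rw [Real.rpow_def_of_pos hA0, Real.rpow_def_of_pos hδ0]
    rw [hL, hlogL]
    have e : 2 * χ * (Real.log 2 + ρ * (c * ((k + 1) * Real.log 2 + Real.log A +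
        k * Real.log (σ - σ')⁻¹) + c ^ 2 * Real.log (χ ^ 2 * 2 ^ k))) =
        2 * χ * (Real.log 2 + ρ * (c * ((k + 1) * Real.log 2) +
          c ^ 2 * Real.log (χ ^ 2 * 2 ^ k))) + Real.log A * (2 * χ * ρ * c) +
          Real.log (σ - σ')⁻¹ * (2 * χ * ρ * c * k) := by ring
    rw [e, Real.exp_add, Real.exp_add]
    ring
  have hΨ0 : 0 < Ψ := lt_of_lt_of_le (by positivity) hthr
  have hlog2 : 0 < Real.log 2 := Real.log_pos (by norm_num)
  set ξ := Real.log (Ψ / (2 * T)) with hξ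
  have hξge : 2 * χ * (Real.log 2 + L) ≤ ξ := by
    rw [hξ, Real.le_log_iff_exp_le (by positivity), le_div_iff₀ (by positivity)]
    linarith
  have hξ0 : 0 < ξ := lt_of_lt_of_le (by positivity) hξge
  obtain ⟨s, hsS, hs1, hs2⟩ := hSex (2 / Ψ * ξ) (by positivity)
  have hs0 := hSpos s hsS
  have hsle : s ≤ 1 := by
    refine hs2.trans ?_
    have h1 : ξ ≤ Ψ / (2 * T) := (Real.log_le_sub_one_of_pos (by positivity)).trans (by linarith)
    calc 2 / Ψ * ξ ≤ 2 / Ψ * (Ψ / (2 * T)) := by gcongr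
      _ = 1 / T := by field_simp
      _ ≤ 1 := (div_le_one hT0).2 hT
  have hm := moser_iteration D g hg hb S hχ hρ hA k hSpos hSmul hD hstep hsS hsle hσ' hσσ' hσ hx
  rw [← hc, ← hL] at hm
  have havg := average_exp_le (hD hσ) hDb hb0 hT0 hΨ0 hs0 (fun y => Real.log (g y)) hosc hle (by
    have : s * Ψ ≤ 2 / Ψ * ξ * Ψ := by gcongr
    have e : 2 / Ψ * ξ * Ψ = 2 * ξ := by field_simp
    rw [e] at this
    rw [← hξ]; linarith)
  have esum : ∑ y ∈ D σ, Real.exp (s * Real.log (g y)) = ∑ y ∈ D σ, g y ^ s :=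
    Finset.sum_congr rfl fun y _ => by rw [Real.rpow_def_of_pos (hg y), mul_comm]
  rw [esum] at havg
  have hpos : 0 < b⁻¹ * ∑ y ∈ D σ, g y ^ s :=
    mul_pos (inv_pos.2 hb0) (Finset.sum_pos (fun y _ => Real.rpow_pos_of_pos (hg y) _)
      ⟨x, hD hσσ'.le hx⟩)
  have hlogN := Real.log_le_log hpos havg
  rw [Real.log_mul (by norm_num) (Real.exp_pos _).ne', Real.log_exp] at hlogN
  have h1 : s * Real.log (g x) ≤ s * Ψ / 2 + (Real.log 2 + L) := by linarith
  have h2 : Real.log 2 + L ≤ s * (Ψ / 4) := by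
    have h3 : Real.log 2 + L ≤ ξ / (2 * χ) := by
      rw [le_div_iff₀ (by positivity)]; linarith
    have h4 : ξ / (2 * χ) = 2 / Ψ * ξ / χ * (Ψ / 4) := by field_simp; norm_num
    rw [h4] at h3
    refine h3.trans ?_
    gcongr
  have h3 : s * Real.log (g x) ≤ s * (3 / 4 * Ψ) := by linarith
  exact le_of_mul_le_mul_left h3 hs0

/-- Iterating the improvement of upper bounds. -/
lemma upper_bound_of_improvement {V : Type*} (D : ℝ → Finset V) (ℓ : V → ℝ) {W K : ℝ} (hW : 0 < W)
    (hK : 0 < K) (hD : ∀ ⦃σ' σ : ℝ⦄, σ' ≤ σ → D σ' ⊆ D σ)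
    (himp : ∀ σ' σ Ψ : ℝ, 1 / 2 ≤ σ' → σ' < σ → σ ≤ 3 / 4 → W * (σ - σ')⁻¹ ^ K ≤ Ψ →
      (∀ x ∈ D σ, ℓ x ≤ Ψ) → ∀ x ∈ D σ', ℓ x ≤ 3 / 4 * Ψ) :
    ∀ x ∈ D (1 / 2), ℓ x ≤ W * (4 * (1 - (3 / 4) ^ (1 / K))⁻¹) ^ K := by
  set θ : ℝ := (3 / 4) ^ (1 / K) with hθ
  have hθ0 : 0 < θ := by positivity
  have hθ1 : θ < 1 := Real.rpow_lt_one (by norm_num) (by norm_num) (by positivity)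
  have hθK : θ ^ K = 3 / 4 := by
    rw [hθ, ← Real.rpow_mul (by norm_num), one_div_mul_cancel hK.ne', Real.rpow_one]
  have h1θ : 0 < (1 - θ)⁻¹ := inv_pos.2 (by linarith)
  set Y := W * (4 * (1 - θ)⁻¹) ^ K with hY
  have hY0 : 0 < Y := by positivity
  set σs : ℕ → ℝ := fun i => 3 / 4 - 1 / 4 * θ ^ i with hσs
  have hθi : ∀ i : ℕ, 0 < θ ^ i ∧ θ ^ i ≤ 1 := fun i =>
    ⟨by positivity, pow_le_one₀ hθ0.le hθ1.le⟩
  have hdown : ∀ i : ℕ, (∀ x ∈ D (σs (i + 1)), ℓ x ≤ (4 / 3) ^ (i + 1) * Y) →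
      ∀ x ∈ D (σs i), ℓ x ≤ (4 / 3) ^ i * Y := by
    intro i hi x hx
    have hgap : σs (i + 1) - σs i = 1 / 4 * θ ^ i * (1 - θ) := by
      simp only [hσs]; ring
    have h1 := himp (σs i) (σs (i + 1)) ((4 / 3) ^ (i + 1) * Y)
      (by simp only [hσs]; linarith [(hθi i).2])
      (by
        have : 0 < 1 / 4 * θ ^ i * (1 - θ) := mul_pos (by linarith [(hθi i).1]) (by linarith)
        linarith)
      (by simp only [hσs]; linarith [(hθi (i + 1)).1])
      (by
        have e : (σs (i + 1) - σs i)⁻¹ = 4 * (1 - θ)⁻¹ * (θ ^ i)⁻¹ := by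
          rw [hgap, mul_inv, mul_inv]; norm_num; ring
        have e2 : ((θ ^ i)⁻¹) ^ K = (4 / 3) ^ i := by
          rw [Real.inv_rpow (hθi i).1.le, ← Real.rpow_natCast, ← Real.rpow_mul hθ0.le,
            mul_comm (i : ℝ) K, Real.rpow_mul hθ0.le, hθK, Real.rpow_natCast, ← inv_pow]
          norm_num
        rw [e, Real.mul_rpow (by positivity) (inv_nonneg.2 (hθi i).1.le), e2, ← mul_assoc, ← hY,
          pow_succ]
        have : 0 < (4 / 3 : ℝ) ^ i := by positivity
        nlinarith [mul_pos hY0 this])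
      hi x hx
    refine h1.trans (le_of_eq ?_)
    rw [pow_succ]; ring
  have hdesc : ∀ i : ℕ, (∀ x ∈ D (σs i), ℓ x ≤ (4 / 3) ^ i * Y) →
      ∀ x ∈ D (σs 0), ℓ x ≤ (4 / 3) ^ 0 * Y := by
    intro i
    induction i with
    | zero => exact id
    | succ i ih => exact fun h => ih (hdown i h)
  obtain ⟨C, hC⟩ : ∃ C, ∀ x ∈ D (3 / 4), ℓ x ≤ C := by
    refine ⟨∑ x ∈ D (3 / 4), |ℓ x|, fun x hx => (le_abs_self _).trans ?_⟩
    exact Finset.single_le_sum (f := fun x => |ℓ x|) (fun y _ => abs_nonneg _) hx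
  obtain ⟨I, hI⟩ := pow_unbounded_of_one_lt (C / Y) (by norm_num : (1 : ℝ) < 4 / 3)
  rw [div_lt_iff₀ hY0] at hI
  have h := hdesc I fun x hx =>
    (hC x (hD (by simp only [hσs]; linarith [(hθi I).1]) hx)).trans hI.le
  intro x hx
  have h2 := h x (by
    have : σs 0 = 1 / 2 := by simp only [hσs]; norm_num
    rwa [this])
  simpa using h2

namespace ConductanceGraph

variable {V : Type} {d : ℕ} {Creg Criso : ℝ} (X : ConductanceGraph V d Creg Criso)

/-- Comparison of the values of a positive harmonic function at neighbours. -/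
lemma le_mu_mul_nu_mul_of_adj {u : V → ℝ} (hu : ∀ x, 0 < u x) {x y : V} (hxy : X.G.Adj x y)
    (hharm : lap X.nbr X.ω u x = 0) :
    u y ≤ mu X.nbr X.ω x * nu X.nbr X.ω x * u x := by
  have hy : y ∈ X.nbr x := (X.mem_nbr x y).2 hxy
  have hω : 0 < X.ω x y := X.pos x y hxy
  have h1 : X.ω x y ≤ mu X.nbr X.ω x :=
    Finset.single_le_sum (f := fun z => X.ω x z) (fun z _ => X.nonneg_weight x z) hy
  have h2 : (X.ω x y)⁻¹ ≤ nu X.nbr X.ω x :=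
    Finset.single_le_sum (f := fun z => (X.ω x z)⁻¹)
      (fun z _ => inv_nonneg.2 (X.nonneg_weight x z)) hy
  have hmu : 0 < mu X.nbr X.ω x := hω.trans_le h1
  have h3 : ∑ z ∈ X.nbr x, X.ω x z * (u z - u x) = 0 := by
    rcases mul_eq_zero.1 hharm with h | h
    · exact absurd h (inv_pos.2 hmu).ne'
    · exact h
  have h4 : ∑ z ∈ X.nbr x, X.ω x z * u z = mu X.nbr X.ω x * u x := by
    simp only [mul_sub, Finset.sum_sub_distrib] at h3
    rw [mu, Finset.sum_mul]; linarith
  have h5 : X.ω x y * u y ≤ mu X.nbr X.ω x * u x := by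
    rw [← h4]
    exact Finset.single_le_sum (f := fun z => X.ω x z * u z)
      (fun z _ => mul_nonneg (X.nonneg_weight x z) (hu z).le) hy
  calc u y = (X.ω x y)⁻¹ * (X.ω x y * u y) := by field_simp
    _ ≤ nu X.nbr X.ω x * (mu X.nbr X.ω x * u x) := by
      gcongr
      · exact mul_nonneg hω.le (hu y).le
      · exact X.nu_nonneg x
    _ = _ := by ring

/-- Chaining of comparisons between neighbours. -/
lemma le_pow_dist_mul {u : V → ℝ} (hu : ∀ x, 0 < u x) {Q : ℝ} (hQ : 1 ≤ Q) {x₀ : V} {n : ℝ}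
    (hadj : ∀ x ∈ X.ball x₀ n, ∀ y, X.G.Adj x y → u y ≤ Q * u x) (k : ℕ) :
    ∀ x ∈ X.ball x₀ n, X.G.dist x₀ x ≤ k → u x ≤ Q ^ k * u x₀ ∧ u x₀ ≤ Q ^ k * u x := by
  induction k with
  | zero =>
    intro x _ hx
    have : x₀ = x := X.connected.dist_eq_zero_iff.1 (by omega)
    subst this; simp
  | succ k ih =>
    intro x hxB hx
    have hQk : 1 ≤ Q ^ (k + 1) := one_le_pow₀ hQ
    rcases eq_or_ne x x₀ with rfl | hne
    · have := le_mul_of_one_le_left (hu x).le hQk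
      exact ⟨this, this⟩
    obtain ⟨z, hxz, hz⟩ := X.exists_adj_dist_lt hne
    have hzB : z ∈ X.ball x₀ n := by
      rw [X.mem_ball] at hxB ⊢
      have : (X.G.dist x₀ z : ℝ) ≤ X.G.dist x₀ x := by exact_mod_cast (by omega)
      linarith
    obtain ⟨h1, h2⟩ := ih z hzB (by omega)
    have h3 := hadj x hxB z hxz
    have h4 := hadj z hzB x hxz.symm
    constructor
    · calc u x ≤ Q * u z := h4
        _ ≤ Q * (Q ^ k * u x₀) := by gcongr
        _ = _ := by ring
    · calc u x₀ ≤ Q ^ k * u z := h2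
        _ ≤ Q ^ k * (Q * u x) := by gcongr
        _ = _ := by ring

/-- Harnack inequality on balls of bounded radius. -/
lemma harnack_of_lt (hCreg : 0 < Creg) {p q : ℝ} (hp : 1 < p) (hq : 1 < q) {x₀ : V} {n : ℝ}
    (hn : 1 ≤ n) (hn8 : n < 8) {u : V → ℝ} (hu : ∀ x, 0 < u x)
    (hharm : ∀ x ∈ X.ball x₀ n, lap X.nbr X.ω u x = 0) :
    ∀ x ∈ X.ball x₀ (n / 2), ∀ y ∈ X.ball x₀ (n / 2), u x ≤
      Real.exp (8 * (Creg * 8 ^ d) ^ (1 / p + 1 / q) * X.contrast p q x₀ n) * u y := by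
  have hC1 := X.one_le_Creg hCreg x₀
  have hM1 := X.one_le_contrast p q x₀ n
  have hM2 := X.nrm_mul_nrm_le_contrast p q x₀ n
  set M := X.contrast p q x₀ n with hM
  set b : ℝ := ((X.ball x₀ n).card : ℝ) with hb
  set C : ℝ := (Creg * 8 ^ d) ^ (1 / p + 1 / q) with hC
  have hb1 : 0 < b := by
    have : (0 : ℝ) < Creg⁻¹ * n ^ d := by positivity
    exact this.trans_le (X.volume x₀ n hn).1
  have hbC : b ^ (1 / p + 1 / q) ≤ C := by
    refine Real.rpow_le_rpow hb1.le ((X.volume x₀ n hn).2.trans ?_) (by positivity)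
    gcongr
  have hCone : 1 ≤ C := Real.one_le_rpow
    (one_le_mul_of_one_le_of_one_le hC1 (one_le_pow₀ (by norm_num))) (by positivity)
  have hQ : 1 ≤ C * M := one_le_mul_of_one_le_of_one_le hCone hM1
  have hadj : ∀ x ∈ X.ball x₀ n, ∀ y, X.G.Adj x y → u y ≤ C * M * u x := by
    intro x hx y hxy
    refine (X.le_mu_mul_nu_mul_of_adj hu hxy (hharm x hx)).trans ?_
    have h1 := le_card_rpow_mul_nrm (p := p) (by linarith) X.mu_nonneg hx
    have h2 := le_card_rpow_mul_nrm (p := q) (by linarith) X.nu_nonneg hx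
    have h3 := nrm_nonneg (X.ball x₀ n) p (mu X.nbr X.ω)
    have h4 := nrm_nonneg (X.ball x₀ n) q (nu X.nbr X.ω)
    refine mul_le_mul_of_nonneg_right ?_ (hu x).le
    calc _ ≤ (b ^ (1 / p) * nrm (X.ball x₀ n) p (mu X.nbr X.ω)) *
          (b ^ (1 / q) * nrm (X.ball x₀ n) q (nu X.nbr X.ω)) :=
          mul_le_mul h1 h2 (X.nu_nonneg x) (by positivity)
      _ = b ^ (1 / p + 1 / q) * (nrm (X.ball x₀ n) p (mu X.nbr X.ω) *
          nrm (X.ball x₀ n) q (nu X.nbr X.ω)) := by rw [Real.rpow_add hb1]; ring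
      _ ≤ C * M := by gcongr
  have hsub : X.ball x₀ (n / 2) ⊆ X.ball x₀ n := X.ball_mono x₀ (by linarith)
  have hdist : ∀ x ∈ X.ball x₀ (n / 2), X.G.dist x₀ x ≤ 4 := by
    intro x hx
    rw [X.mem_ball] at hx
    have : (X.G.dist x₀ x : ℝ) ≤ 4 := by linarith
    exact_mod_cast this
  intro x hx y hy
  have h1 := (X.le_pow_dist_mul hu hQ hadj 4 x (hsub hx) (hdist x hx)).1
  have h2 := (X.le_pow_dist_mul hu hQ hadj 4 y (hsub hy) (hdist y hy)).2
  have h3 : C * M ≤ Real.exp (C * M) := by linarith [Real.add_one_le_exp (C * M)]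
  calc u x ≤ (C * M) ^ 4 * u x₀ := h1
    _ ≤ (C * M) ^ 4 * ((C * M) ^ 4 * u y) := by gcongr
    _ = (C * M) ^ 8 * u y := by ring
    _ ≤ Real.exp (C * M) ^ 8 * u y := by gcongr; exact (hu y).le
    _ = _ := by rw [← Real.exp_nat_mul]; congr 2; push_cast; ring

end ConductanceGraph

/-- Exponents staying away from a critical value along a geometric progression. -/
lemma le_abs_zpow_sub_one {χ : ℝ} (hχ : 1 < χ) (j : ℤ) :
    1 - (Real.sqrt χ)⁻¹ ≤ |Real.sqrt χ * χ ^ j - 1| := by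
  set τ := Real.sqrt χ with hτ
  have hτ1 : 1 < τ := by rw [hτ]; exact Real.lt_sqrt_of_sq_lt (by simpa using hχ)
  have hττ : τ * τ = χ := Real.mul_self_sqrt (by linarith)
  have hτ0 : 0 < τ := by linarith
  rcases le_or_gt 0 j with hj | hj
  · have h1 : 1 ≤ χ ^ j := one_le_zpow₀ hχ.le hj
    have h2 : τ ≤ τ * χ ^ j := le_mul_of_one_le_right hτ0.le h1
    have h3 : 2 ≤ τ + τ⁻¹ := by
      have : τ * τ⁻¹ = 1 := mul_inv_cancel₀ hτ0.ne'
      have h4 : τ + τ⁻¹ - 2 = (τ - 1) ^ 2 * τ⁻¹ := by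
        linear_combination (τ - 2) * (-this)
      have : 0 ≤ (τ - 1) ^ 2 * τ⁻¹ := by positivity
      linarith
    exact le_trans (by linarith) (le_abs_self _)
  · have h1 : χ ^ j ≤ χ⁻¹ := by
      rw [← zpow_neg_one]; exact zpow_le_zpow_right₀ hχ.le (by omega)
    have h2 : τ * χ ^ j ≤ τ⁻¹ := by
      calc τ * χ ^ j ≤ τ * χ⁻¹ := by gcongr
        _ = τ⁻¹ := by rw [← hττ]; field_simp
    exact le_trans (by linarith) (neg_le_abs _)

/-- A geometric progression meets all large enough intervals. -/
lemma exists_mul_zpow_mem {χ a s : ℝ} (hχ : 1 < χ) (ha : 0 < a) (hs : 0 < s) :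
    ∃ j : ℤ, s / χ ≤ a * χ ^ j ∧ a * χ ^ j ≤ s := by
  obtain ⟨j, hj1, hj2⟩ := exists_mem_Ico_zpow (div_pos hs ha) hχ
  refine ⟨j, ?_, ?_⟩
  · rw [div_le_iff₀ (by linarith)]
    rw [div_lt_iff₀ ha, zpow_add_one₀ (by linarith)] at hj2
    linarith
  · rw [le_div_iff₀ ha] at hj1
    linarith

/-- Gain of integrability for powers of normalised positive harmonic functions. -/
lemma exists_normalized_step {d : ℕ} (hd : 2 ≤ d) {Creg Criso : ℝ} (hCreg : 0 < Creg)
    (hCriso : 0 < Criso) {p q ρ : ℝ} (hp : 1 < p) (hq : 1 < q) (hρ : 0 < ρ)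
    (hρq : 1 / ρ = 1 - 2 / (d : ℝ) + 1 / q) (hχ : 1 < ρ * (1 - 1 / p)) :
    ∃ K : ℝ, 1 ≤ K ∧ ∀ (V : Type) (X : ConductanceGraph V d Creg Criso) (x₀ : V) (n : ℝ), 1 ≤ n →
      ∀ u : V → ℝ, (∀ x, 0 < u x) → (∀ x ∈ X.ball x₀ n, lap X.nbr X.ω u x = 0) →
      ∀ ε c : ℝ, ε = 1 ∨ ε = -1 → ∀ j : ℤ, ∀ s : ℝ,
      s = p / (p - 1) * Real.sqrt (ρ * (1 - 1 / p)) * (ρ * (1 - 1 / p)) ^ j →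
      ∀ σ' σ : ℝ, 1 / 2 ≤ σ' → σ' < σ → σ ≤ 3 / 4 →
      ((X.ball x₀ n).card : ℝ)⁻¹ * ∑ x ∈ X.ball x₀ (σ' * n),
          Real.exp (ε * (Real.log (u x) - c)) ^ (s * (ρ * (1 - 1 / p))) ≤
        (K * X.contrast p q x₀ n * (1 + s ^ 2) * (σ - σ')⁻¹ ^ (d + 2)) ^ ρ *
        (((X.ball x₀ n).card : ℝ)⁻¹ * ∑ x ∈ X.ball x₀ (σ * n),
          Real.exp (ε * (Real.log (u x) - c)) ^ s) ^ (ρ * (1 - 1 / p)) := by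
  set χ := ρ * (1 - 1 / p) with hχdef
  set t := p / (p - 1) with ht
  have hp1 : 0 < p - 1 := by linarith
  have ht1 : 1 ≤ t := by rw [ht, le_div_iff₀ hp1]; linarith
  have ht0 : 0 < t := by linarith
  have htχ : χ * t = ρ := by rw [hχdef, ht]; field_simp
  have hτ1 : 1 < Real.sqrt χ := Real.lt_sqrt_of_sq_lt (by simpa using hχ)
  have hτ0 : 0 < Real.sqrt χ := by linarith
  have hm : 0 < 1 - (Real.sqrt χ)⁻¹ := by
    have := inv_lt_one_of_one_lt₀ hτ1
    linarith
  have hm1 : 1 - (Real.sqrt χ)⁻¹ ≤ 1 := by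
    have := inv_pos.2 hτ0
    linarith
  obtain ⟨K, hK1, hK⟩ := exists_rpow_step hd hCreg hCriso hp hq hρ hρq hχ.le hm hm1
  refine ⟨K, hK1, ?_⟩
  intro V X x₀ n hn u hu hharm ε c hε j s hs σ' σ hσ' hσσ' hσ
  have hχ0 : 0 < χ := by linarith
  have hχj : 0 < χ ^ j := zpow_pos hχ0 j
  have hs0 : 0 < s := by rw [hs]; positivity
  have hε2 : ε ^ 2 = 1 := by rcases hε with rfl | rfl <;> norm_num
  have hεne : ε ≠ 0 := by rintro rfl; norm_num at hε2
  have hst : s / t = Real.sqrt χ * χ ^ j := by rw [hs]; field_simp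
  set α := ε * s / (2 * t) with hα
  have hα0 : α ≠ 0 := div_ne_zero (mul_ne_zero hεne hs0.ne') (by positivity)
  have h2α : 2 * α = ε * (Real.sqrt χ * χ ^ j) := by rw [← hst, hα]; field_simp
  have hadm : 1 - (Real.sqrt χ)⁻¹ ≤ |2 * α - 1| := by
    rw [h2α]
    rcases hε with rfl | rfl
    · rw [one_mul]; exact le_abs_zpow_sub_one hχ j
    · refine hm1.trans ?_
      have : 0 < Real.sqrt χ * χ ^ j := by positivity
      exact le_trans (by linarith) (neg_le_abs _)
  have h := hK V X x₀ n hn u hu hharm α hα0 hadm σ' σ hσ' hσσ' hσ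
  have e1 : 2 * α * t = ε * s := by rw [hα]; field_simp
  have e2 : 2 * α * ρ = ε * s * χ := by rw [← htχ, ← e1]; ring
  rw [e1, e2] at h
  have hM1 := X.one_le_contrast p q x₀ n
  have hα2 : α ^ 2 ≤ s ^ 2 := by
    have e : α ^ 2 = s ^ 2 / (4 * t ^ 2) := by
      rw [hα, div_pow, mul_pow, hε2]; ring
    rw [e]
    exact div_le_self (by positivity) (by nlinarith)
  have hpow : ∀ (r : ℝ) (x : V), Real.exp (ε * (Real.log (u x) - c)) ^ r =
      Real.exp (-(ε * c * r)) * u x ^ (ε * r) := by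
    intro r x
    rw [← Real.exp_mul, Real.rpow_def_of_pos (hu x), ← Real.exp_add]
    congr 1; ring
  have hδ : 0 < (σ - σ')⁻¹ := inv_pos.2 (by linarith)
  have hsum0 : 0 ≤ ((X.ball x₀ n).card : ℝ)⁻¹ * ∑ x ∈ X.ball x₀ (σ * n), u x ^ (ε * s) :=
    mul_nonneg (by positivity) (Finset.sum_nonneg fun x _ => Real.rpow_nonneg (hu x).le _)
  simp only [hpow, ← Finset.mul_sum]
  rw [mul_left_comm, mul_left_comm _ (Real.exp (-(ε * c * s))),
    Real.mul_rpow (Real.exp_pos _).le hsum0, ← Real.exp_mul, mul_left_comm (_ ^ ρ)]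
  have e3 : -(ε * c * (s * χ)) = -(ε * c * s) * χ := by ring
  rw [e3, ← mul_assoc ε s χ]
  refine mul_le_mul_of_nonneg_left (h.trans ?_) (Real.exp_pos _).le
  refine mul_le_mul_of_nonneg_right ?_ (Real.rpow_nonneg hsum0 _)
  refine Real.rpow_le_rpow (by positivity) ?_ hρ.le
  gcongr

/-- Two sided bound for the logarithm of positive harmonic functions on large balls. -/
lemma exists_log_bound {d : ℕ} (hd : 2 ≤ d) {Creg Criso : ℝ} (hCreg : 0 < Creg)
    (hCriso : 0 < Criso) {p q : ℝ} (hp : 1 < p) (hq : 1 < q)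
    (hpq : 1 / p + 1 / q < 2 / (d : ℝ)) :
    ∃ C κ : ℝ, 0 < C ∧ 1 ≤ κ ∧
      ∀ (V : Type) (X : ConductanceGraph V d Creg Criso) (x₀ : V) (n : ℝ), 8 ≤ n →
      ∀ u : V → ℝ, (∀ x, 0 < u x) → (∀ x ∈ X.ball x₀ n, lap X.nbr X.ω u x = 0) →
      ∃ c : ℝ, ∀ ε : ℝ, ε = 1 ∨ ε = -1 → ∀ x ∈ X.ball x₀ (1 / 2 * n),
        ε * (Real.log (u x) - c) ≤ C * X.contrast p q x₀ n ^ κ := by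
  have hd' : (2 : ℝ) ≤ d := by exact_mod_cast hd
  have h2d : 2 / (d : ℝ) ≤ 1 := by rw [div_le_one (by linarith)]; exact hd'
  have hq0 : 0 < 1 / q := by positivity
  set ρ := (1 - 2 / (d : ℝ) + 1 / q)⁻¹ with hρdef
  have hden : 0 < 1 - 2 / (d : ℝ) + 1 / q := by linarith
  have hρ : 0 < ρ := inv_pos.2 hden
  have hρq : 1 / ρ = 1 - 2 / (d : ℝ) + 1 / q := by rw [hρdef, one_div, inv_inv]
  have hχ : 1 < ρ * (1 - 1 / p) := by
    rw [hρdef, inv_mul_eq_div, lt_div_iff₀ hden]; linarith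
  obtain ⟨K, hK1, hK⟩ := exists_normalized_step hd hCreg hCriso hp hq hρ hρq hχ
  set χ := ρ * (1 - 1 / p) with hχdef
  set a := p / (p - 1) * Real.sqrt χ with ha
  have hχ0 : 0 < χ := by linarith
  have hχ1 : 0 < (χ - 1)⁻¹ := inv_pos.2 (by linarith)
  have ha0 : 0 < a := by
    have : 0 < p - 1 := by linarith
    positivity
  set S : Set ℝ := {s | ∃ j : ℤ, s = a * χ ^ j} with hS
  set E := Real.exp (2 * χ * (Real.log 2 + ρ * ((χ - 1)⁻¹ * (((d + 2 : ℕ) + 1) * Real.log 2) +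
      (χ - 1)⁻¹ ^ 2 * Real.log (χ ^ 2 * 2 ^ (d + 2))))) with hE
  set κ := 2 * χ * ρ * (χ - 1)⁻¹ with hκ
  have hκ0 : 0 < κ := by positivity
  set T₀ := 15 * ((1 + Creg) / Criso + 1) with hT₀
  have hT₀1 : 1 ≤ T₀ := by
    have : 0 < (1 + Creg) / Criso := by positivity
    rw [hT₀]; linarith
  set N := κ * (d + 2 : ℕ) with hN
  have hN0 : 0 < N := by positivity
  set Z : ℝ := (4 * (1 - (3 / 4) ^ (1 / N))⁻¹) ^ N with hZ
  have hZ0 : 0 < Z := by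
    have : (3 / 4 : ℝ) ^ (1 / N) < 1 := Real.rpow_lt_one (by norm_num) (by norm_num) (by positivity)
    have : 0 < (1 - (3 / 4 : ℝ) ^ (1 / N))⁻¹ := inv_pos.2 (by linarith)
    positivity
  have hE0 : 0 < E := Real.exp_pos _
  refine ⟨2 * E * T₀ * K ^ κ * Z, 1 + κ, by positivity, by linarith, ?_⟩
  intro V X x₀ n hn u hu hharm
  obtain ⟨c, hc⟩ := X.exists_log_oscillation_le hCreg hCriso hp hq hn hu hharm
  refine ⟨c, fun ε hε => ?_⟩
  have hM1 := X.one_le_contrast p q x₀ n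
  have hstep := hK V X x₀ n (by linarith) u hu hharm ε c hε
  have hosc := hc ε hε
  set M := X.contrast p q x₀ n with hM
  have hM0 : 0 < M := by linarith
  have hmono : ∀ ⦃σ' σ : ℝ⦄, σ' ≤ σ → X.ball x₀ (σ' * n) ⊆ X.ball x₀ (σ * n) :=
    fun σ' σ h => X.ball_mono x₀ (mul_le_mul_of_nonneg_right h (by linarith))
  have hsub : X.ball x₀ (3 / 4 * n) ⊆ X.ball x₀ n := X.ball_mono x₀ (by linarith)
  have hA : 1 ≤ K * M := one_le_mul_of_one_le_of_one_le hK1 hM1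
  have hT : 1 ≤ T₀ * M := one_le_mul_of_one_le_of_one_le hT₀1 hM1
  have hW : 0 < 2 * E * (T₀ * M) * (K * M) ^ κ := by positivity
  have hb : (1 : ℝ) ≤ ((X.ball x₀ n).card : ℝ) := by
    exact_mod_cast Finset.card_pos.2 ⟨x₀, X.center_mem_ball x₀ (by linarith)⟩
  have key := upper_bound_of_improvement (fun σ => X.ball x₀ (σ * n))
    (fun x => ε * (Real.log (u x) - c)) hW hN0 hmono (by
      intro σ' σ Ψ hσ' hσσ' hσ hΨ hle x hx
      have := improve_upper_bound (fun σ => X.ball x₀ (σ * n))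
        (fun x => Real.exp (ε * (Real.log (u x) - c))) (fun x => Real.exp_pos _) hb S hχ hρ hA hT
        (d + 2)
        (by rintro s ⟨j, rfl⟩; exact mul_pos ha0 (zpow_pos hχ0 j))
        (by
          rintro s ⟨j, rfl⟩
          exact ⟨j + 1, by rw [zpow_add_one₀ hχ0.ne']; ring⟩)
        (by
          intro s hs
          obtain ⟨j, hj⟩ := exists_mul_zpow_mem hχ ha0 hs
          exact ⟨_, ⟨j, rfl⟩, hj⟩)
        hmono (by exact_mod_cast Finset.card_le_card hsub)
        (by rintro s ⟨j, hj⟩; exact hstep j s hj)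
        (by simpa only [Real.log_exp] using hosc) hσ' hσσ' hσ hΨ
        (by simpa only [Real.log_exp] using hle) hx
      simpa only [Real.log_exp] using this)
  intro x hx
  refine (key x hx).trans (le_of_eq ?_)
  rw [Real.mul_rpow (by linarith) hM0.le, Real.rpow_add hM0, Real.rpow_one]
  ring

end EllipticHarnack

open RCM in
/-- **Elliptic Harnack inequality.** -/
theorem elliptic_harnack_inequality
    (d : ℕ) (hd : 2 ≤ d) (Creg Criso : ℝ) (hCreg : 0 < Creg) (hCriso : 0 < Criso)
    (p q : ℝ) (hp : 1 < p) (hq : 1 < q) (hpq : 1 / p + 1 / q < 2 / (d : ℝ)) :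
    ∃ c₁ c₂ κ : ℝ, 0 < c₁ ∧ 0 < c₂ ∧ 0 < κ ∧
      ∀ (V : Type) (G : SimpleGraph V) (nbr : V → Finset V)
        (_ : ∀ x y, y ∈ nbr x ↔ G.Adj x y)
        (_ : Infinite V) (_ : G.Connected)
        (ball : V → ℝ → Finset V)
        (_ : ∀ (x : V) (r : ℝ) (y : V), y ∈ ball x r ↔ (G.dist x y : ℝ) ≤ r)
        (_ : ∀ (x : V) (r : ℝ), 1 ≤ r →
              Creg⁻¹ * r ^ d ≤ ((ball x r).card : ℝ) ∧ ((ball x r).card : ℝ) ≤ Creg * r ^ d)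
        (_ : ∀ (x : V) (r : ℝ) (A : Finset V), 1 ≤ r → A.Nonempty → A ⊆ ball x r →
              (A.card : ℝ) < ((ball x r).card : ℝ) / 2 →
              Criso / r ≤ ((RCM.relBdry G (ball x r) A).card : ℝ) / (A.card : ℝ))
        (ω : V → V → ℝ)
        (_ : ∀ x y, ω x y = ω y x)
        (_ : ∀ x y, G.Adj x y → 0 < ω x y)
        (_ : ∀ x y, ¬ G.Adj x y → ω x y = 0)
        (x₀ : V) (n : ℝ) (_ : 1 ≤ n)
        (u : V → ℝ) (_ : ∀ x, 0 < u x)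
        (_ : ∀ x ∈ ball x₀ n, lap nbr ω u x = 0),
        ∀ x ∈ ball x₀ (n / 2), ∀ y ∈ ball x₀ (n / 2),
          u x ≤ c₁ * Real.exp (c₂ *
              (max 1 (nrm (ball x₀ n) p (mu nbr ω) * nrm (ball x₀ n) q (nu nbr ω))) ^ κ)
            * u y := by
  obtain ⟨C, κ, hC, hκ, hlarge⟩ :=
    EllipticHarnack.exists_log_bound hd hCreg hCriso hp hq hpq
  set C' := 8 * (Creg * 8 ^ d) ^ (1 / p + 1 / q) with hC'
  have hC'0 : 0 < C' := by positivity
  refine ⟨1, 2 * C + C', κ, one_pos, by positivity, by linarith, ?_⟩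
  intro V G nbr hnbr _ hconn ball hball hvol hiso ω hsymm hpos hzero x₀ n hn u hu hharm x hx y hy
  let X : EllipticHarnack.ConductanceGraph V d Creg Criso :=
    ⟨G, nbr, hnbr, hconn, ball, hball, hvol, hiso, ω, hsymm, hpos, hzero⟩
  have hM1 : 1 ≤ X.contrast p q x₀ n := X.one_le_contrast p q x₀ n
  change u x ≤ 1 * Real.exp ((2 * C + C') * X.contrast p q x₀ n ^ κ) * u y
  set M := X.contrast p q x₀ n with hM
  have hMκ : M ≤ M ^ κ := by
    simpa using Real.rpow_le_rpow_of_exponent_le hM1 hκ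
  have hMκ0 : 0 < M ^ κ := by linarith
  rw [one_mul]
  rcases lt_or_ge n 8 with h8 | h8
  · refine (X.harnack_of_lt hCreg hp hq hn h8 hu hharm x hx y hy).trans ?_
    refine mul_le_mul_of_nonneg_right (Real.exp_le_exp.2 ?_) (hu y).le
    calc C' * M ≤ C' * M ^ κ := by gcongr
      _ ≤ (2 * C + C') * M ^ κ := by gcongr; linarith
  · obtain ⟨c, hc⟩ := hlarge V X x₀ n h8 u hu hharm
    have hhalf : (1 / 2 * n : ℝ) = n / 2 := by ring
    rw [hhalf] at hc
    have h1 := hc 1 (Or.inl rfl) x hx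
    have h2 := hc (-1) (Or.inr rfl) y hy
    have h3 : Real.log (u x) ≤ (2 * C + C') * M ^ κ + Real.log (u y) := by
      have : 0 < C' * M ^ κ := by positivity
      linarith
    calc u x = Real.exp (Real.log (u x)) := (Real.exp_log (hu x)).symm
      _ ≤ Real.exp ((2 * C + C') * M ^ κ + Real.log (u y)) := Real.exp_le_exp.2 h3
      _ = _ := by rw [Real.exp_add, Real.exp_log (hu y)]
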